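/- Let G = [A M; N B] and G' = [A' M'; N' B'] be generalized matrix algebras over a commutative ring R with 1/2 ∈ R, and let l : G → G' be a Lie isomorphism. Suppose that (1) every commuting R-linear map on A' is proper, or every commuting R-linear map on B' is proper; (2) π_{A'}(Z(G')) = Z(A') ≠ A' and π_{B'}(Z(G')) = Z(B') ≠ B'; (3) at least one of A, B is noncommutative; and (4) M' is loyal. Then l = m + n, where m : G → G' is an injective algebra homomorphism or the negative of an injective algebra anti-homomorphism, and n : G → Z(G') is an R-linear map with n([x, y]) = 0 for all x, y ∈ G. Moreover, if Z(G') = R·1, then m is surjective. -/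

import Mathlib

/-- A realization of the `R`-algebra `G` as a generalized matrix algebra
`[A M; N B]` arising from a Morita context `(A, B, M, N, Φ, Ψ)`:
`G` decomposes `R`-linearly as `A ⊕ M ⊕ N ⊕ B` (via the injections `ιA, ιM, ιN, ιB`
and the projections `pA, pM, pN, pB`), and multiplication in `G` follows the
matrix-like multiplication rules.  The bimodule actions of `A` and `B` on `M` and `N`
and the pairings `Φ : M ⊗ N → A`, `Ψ : N ⊗ M → B` are recovered from the
multiplication of `G`; the requirement that the corresponding products land in the
appropriate corner is expressed by the `mul_*` fields.  The standing assumption that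
`M` is faithful as a left `A`-module and as a right `B`-module is included. -/
structure GMA (R A B M N G : Type*) [CommRing R]
    [Ring A] [Algebra R A] [Ring B] [Algebra R B]
    [AddCommGroup M] [Module R M] [AddCommGroup N] [Module R N]
    [Ring G] [Algebra R G] where
  ιA : A →ₗ[R] G
  ιB : B →ₗ[R] G
  ιM : M →ₗ[R] G
  ιN : N →ₗ[R] G
  pA : G →ₗ[R] A
  pB : G →ₗ[R] B
  pM : G →ₗ[R] M
  pN : G →ₗ[R] N
  decomp : ∀ g : G, g = ιA (pA g) + ιM (pM g) + ιN (pN g) + ιB (pB g)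
  pA_ιA : ∀ a, pA (ιA a) = a
  pA_ιM : ∀ m, pA (ιM m) = 0
  pA_ιN : ∀ n, pA (ιN n) = 0
  pA_ιB : ∀ b, pA (ιB b) = 0
  pM_ιA : ∀ a, pM (ιA a) = 0
  pM_ιM : ∀ m, pM (ιM m) = m
  pM_ιN : ∀ n, pM (ιN n) = 0
  pM_ιB : ∀ b, pM (ιB b) = 0
  pN_ιA : ∀ a, pN (ιA a) = 0
  pN_ιM : ∀ m, pN (ιM m) = 0
  pN_ιN : ∀ n, pN (ιN n) = n
  pN_ιB : ∀ b, pN (ιB b) = 0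
  pB_ιA : ∀ a, pB (ιA a) = 0
  pB_ιM : ∀ m, pB (ιM m) = 0
  pB_ιN : ∀ n, pB (ιN n) = 0
  pB_ιB : ∀ b, pB (ιB b) = b
  one_def : (1 : G) = ιA 1 + ιB 1
  mul_AA : ∀ a a', ιA a * ιA a' = ιA (a * a')
  mul_BB : ∀ b b', ιB b * ιB b' = ιB (b * b')
  mul_AM : ∀ a m, ιA a * ιM m ∈ LinearMap.range ιM
  mul_MB : ∀ m b, ιM m * ιB b ∈ LinearMap.range ιM
  mul_BN : ∀ b n, ιB b * ιN n ∈ LinearMap.range ιN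
  mul_NA : ∀ n a, ιN n * ιA a ∈ LinearMap.range ιN
  mul_MN : ∀ m n, ιM m * ιN n ∈ LinearMap.range ιA
  mul_NM : ∀ n m, ιN n * ιM m ∈ LinearMap.range ιB
  mul_AB : ∀ a b, ιA a * ιB b = 0
  mul_BA : ∀ b a, ιB b * ιA a = 0
  mul_AN : ∀ a n, ιA a * ιN n = 0
  mul_NB : ∀ n b, ιN n * ιB b = 0
  mul_MA : ∀ m a, ιM m * ιA a = 0
  mul_BM : ∀ b m, ιB b * ιM m = 0
  mul_MM : ∀ m m', ιM m * ιM m' = 0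
  mul_NN : ∀ n n', ιN n * ιN n' = 0
  faithful_left : ∀ a : A, (∀ m : M, ιA a * ιM m = 0) → a = 0
  faithful_right : ∀ b : B, (∀ m : M, ιM m * ιB b = 0) → b = 0

/-!
Write `x ∘ y = x * y + y * x`. Since `x` commutes with `x ∘ x`, the Jordan product of `G`,
transported along the Lie isomorphism `l`, is a symmetric bilinear map on `G'` whose trace
`y ↦ q y y` is commuting. Comparing Peirce components and using loyalty, such a map is standard:
`l (x ∘ y) ≡ c (l x ∘ l y) + μ (l x) l y + μ (l y) l x` modulo the center, with central `c` and `μ`.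
Completing the square, `φ = c l + μ (l ·) / 2` satisfies `φ (x ∘ y) ≡ φ x ∘ φ y`.

The associator of `∘` is a double commutator, which `φ` multiplies by `c` on the one hand and, being
Jordan, by `c³` on the other; hence `c³ = c`. Let `e + f = 1` be the diagonal idempotents of `G`.
If `c = 0`, then `μ (l f) = 1`, and `a ∘ f = 0` gives `l a ≡ -μ (l a) l f` for `a ∈ A`, so `A` is
commutative; likewise for `B`. Therefore `c = ± 1`, and adding the Lie relation shows that `φ` is
multiplicative (`c = 1`) or anti-multiplicative (`c = -1`) modulo the center. Comparing the two
bracketings of a triple product removes the central defect, and `m = ± φ`.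
-/

section

attribute [local instance 100] LieRing.ofAssociativeRing

/-! ### Peirce decompositions -/

section Corner

variable {P : Type*} [Ring P]

/-- The Peirce corner `iPj`. It is described by the fixed-point equations `i * x = x` and
`x * j = x`, which cut out `{i * y * j | y ∈ P}` when `i` and `j` are idempotent. -/
def peirceCorner (i j : P) : AddSubgroup P where
  carrier := {x | i * x = x ∧ x * j = x}
  zero_mem' := ⟨mul_zero i, zero_mul j⟩
  add_mem' hx hy := ⟨by rw [mul_add, hx.1, hy.1], by rw [add_mul, hx.2, hy.2]⟩
  neg_mem' hx := ⟨by rw [mul_neg, hx.1], by rw [neg_mul, hx.2]⟩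

namespace peirceCorner

variable {i j k x y z : P}

theorem mul_mem (hx : x ∈ peirceCorner i j) (hy : y ∈ peirceCorner j k) :
    x * y ∈ peirceCorner i k :=
  ⟨by rw [← mul_assoc, hx.1], by rw [mul_assoc, hy.2]⟩

theorem center_mul_mem (hz : z ∈ Subring.center P) (hx : x ∈ peirceCorner i j) :
    z * x ∈ peirceCorner i j :=
  ⟨by rw [← hz.left_comm, hx.1], by rw [mul_assoc, hx.2]⟩

theorem mul_eq_zero_of_left (h : k * i = 0) (hx : x ∈ peirceCorner i j) : k * x = 0 := by
  rw [← hx.1, ← mul_assoc, h, zero_mul]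

theorem mul_eq_zero_of_right (h : j * k = 0) (hx : x ∈ peirceCorner i j) : x * k = 0 := by
  rw [← hx.2, mul_assoc, h, mul_zero]

theorem commute (hx : x ∈ peirceCorner i i) : Commute x i :=
  hx.2.trans hx.1.symm

theorem lie_mem_of_commute (hx : Commute x i) (hy : y ∈ peirceCorner i i) :
    ⁅x, y⁆ ∈ peirceCorner i i := by
  constructor <;> rw [Ring.lie_def]
  · linear_combination (norm := noncomm_ring) x * hy.1 - hx.eq * y - hy.1 * x
  · linear_combination (norm := noncomm_ring) x * hy.2 - y * hx.eq - hy.2 * x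

theorem lie_mem (hx : x ∈ peirceCorner i i) (hy : y ∈ peirceCorner i i) :
    ⁅x, y⁆ ∈ peirceCorner i i :=
  lie_mem_of_commute (commute hx) hy

theorem op_mem (hx : x ∈ peirceCorner i j) :
    MulOpposite.op x ∈ peirceCorner (MulOpposite.op j) (MulOpposite.op i) :=
  ⟨congrArg MulOpposite.op hx.2, congrArg MulOpposite.op hx.1⟩

theorem unop_mem {x : Pᵐᵒᵖ} (hx : x ∈ peirceCorner (MulOpposite.op j) (MulOpposite.op i)) :
    x.unop ∈ peirceCorner i j :=
  ⟨congrArg MulOpposite.unop hx.2, congrArg MulOpposite.unop hx.1⟩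

end peirceCorner

theorem unop_mem_center {z : Pᵐᵒᵖ} (hz : z ∈ Subring.center Pᵐᵒᵖ) : z.unop ∈ Subring.center P :=
  MulOpposite.unop_mem_center_iff.2 hz

theorem op_mem_center {z : P} (hz : z ∈ Subring.center P) :
    MulOpposite.op z ∈ Subring.center Pᵐᵒᵖ :=
  MulOpposite.op_mem_center_iff.2 hz

theorem mem_center_iff_forall_lie_eq_zero {z : P} :
    z ∈ Subring.center P ↔ ∀ x : P, ⁅z, x⁆ = 0 := by
  simp only [Subring.mem_center_iff, Ring.lie_def, sub_eq_zero, eq_comm]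

theorem center_mul_lie {z : P} (hz : z ∈ Subring.center P) (x y : P) :
    ⁅z * x, y⁆ = z * ⁅x, y⁆ := by
  simp only [Ring.lie_def, mul_sub, mul_assoc, hz.left_comm y x]

theorem lie_center_mul {z : P} (hz : z ∈ Subring.center P) (x y : P) :
    ⁅x, z * y⁆ = z * ⁅x, y⁆ := by
  rw [← lie_skew, center_mul_lie hz, ← lie_skew, mul_neg, neg_neg]

theorem lie_eq_lie_of_sub_mem_center {x y : P} (h : x - y ∈ Subring.center P) (z : P) :
    ⁅x, z⁆ = ⁅y, z⁆ := by
  simpa only [sub_lie, sub_eq_zero] using mem_center_iff_forall_lie_eq_zero.1 h z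

end Corner

/-- A pair of complementary idempotents. It presents `P` as the generalized matrix algebra
`[ePe ePf; fPe fPf]`, so that `ePe`, `ePf`, `fPe`, `fPf` are the paper's `A`, `M`, `N`, `B`. -/
structure PeircePair {P : Type*} [Ring P] (e f : P) : Prop where
  add_eq_one : e + f = 1
  mul_eq_zero : e * f = 0

namespace PeircePair

variable {P : Type*} [Ring P] {e f : P}

theorem isIdempotentElem_left (H : PeircePair e f) : e * e = e := by
  rw [← add_zero (e * e), ← H.mul_eq_zero, ← mul_add, H.add_eq_one, mul_one]

theorem isIdempotentElem_right (H : PeircePair e f) : f * f = f := by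
  rw [← zero_add (f * f), ← H.mul_eq_zero, ← add_mul, H.add_eq_one, one_mul]

theorem symm (H : PeircePair e f) : PeircePair f e where
  add_eq_one := by rw [add_comm, H.add_eq_one]
  mul_eq_zero := by
    rw [← add_left_inj (e * e), zero_add, ← add_mul, add_comm, H.add_eq_one, one_mul,
      H.isIdempotentElem_left]

theorem op (H : PeircePair e f) : PeircePair (MulOpposite.op f) (MulOpposite.op e) where
  add_eq_one := by rw [add_comm, ← MulOpposite.op_add, H.add_eq_one, MulOpposite.op_one]
  mul_eq_zero := by rw [← MulOpposite.op_mul, H.mul_eq_zero, MulOpposite.op_zero]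

theorem left_mem (H : PeircePair e f) : e ∈ peirceCorner e e :=
  ⟨H.isIdempotentElem_left, H.isIdempotentElem_left⟩

theorem right_mem (H : PeircePair e f) : f ∈ peirceCorner f f :=
  H.symm.left_mem

theorem mul_mul_mem_left (H : PeircePair e f) (x : P) : e * x * e ∈ peirceCorner e e :=
  ⟨by rw [← mul_assoc, ← mul_assoc, H.left_mem.1], by rw [mul_assoc, H.left_mem.1]⟩

theorem mul_mul_mem_upper (H : PeircePair e f) (x : P) : e * x * f ∈ peirceCorner e f :=
  ⟨by rw [← mul_assoc, ← mul_assoc, H.left_mem.1], by rw [mul_assoc, H.right_mem.1]⟩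

theorem left_mul_right_eq_zero (H : PeircePair e f) {a b : P} (ha : a ∈ peirceCorner e e)
    (hb : b ∈ peirceCorner f f) : a * b = 0 := by
  rw [← ha.2, mul_assoc, peirceCorner.mul_eq_zero_of_left H.mul_eq_zero hb, mul_zero]

theorem eq_add_add_add (H : PeircePair e f) (x : P) :
    x = e * x * e + e * x * f + f * x * e + f * x * f := by
  calc x = (e + f) * x * (e + f) := by rw [H.add_eq_one, one_mul, mul_one]
    _ = _ := by noncomm_ring

theorem upper_eq_zero_of_commute (H : PeircePair e f) {x : P} (hx : Commute x e) :
    e * x * f = 0 := by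
  rw [← hx.eq, mul_assoc, H.mul_eq_zero, mul_zero]

theorem eq_add_of_commute (H : PeircePair e f) {x : P} (hx : Commute x e) :
    x = e * x * e + f * x * f := by
  have lower : f * x * e = 0 := by rw [mul_assoc, hx.eq, ← mul_assoc, H.symm.mul_eq_zero, zero_mul]
  simpa only [H.upper_eq_zero_of_commute hx, lower, add_zero] using H.eq_add_add_add x

theorem commute_right_iff (H : PeircePair e f) {x : P} : Commute x f ↔ Commute x e := by
  rw [eq_sub_of_add_eq' H.add_eq_one]
  constructor <;> intro h
  · simpa using (Commute.one_right x).sub_right h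
  · exact (Commute.one_right x).sub_right h

theorem commute_left_of_mem_right (H : PeircePair e f) {b : P} (hb : b ∈ peirceCorner f f) :
    Commute b e :=
  H.commute_right_iff.1 (peirceCorner.commute hb)

end PeircePair

theorem lie_lie_lie_of_isIdempotentElem {P : Type*} [Ring P] {e : P} (he : e * e = e) (x : P) :
    ⁅⁅⁅x, e⁆, e⁆, e⁆ = ⁅x, e⁆ := by
  simp only [Ring.lie_def, mul_sub, sub_mul, mul_assoc, he]
  simp only [← mul_assoc, he]
  abel

namespace PeircePair

variable {P : Type*} [Ring P] {e f : P}

theorem upper_lie_left (H : PeircePair e f) {a : P} (ha : a ∈ peirceCorner e e) (x : P) :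
    e * ⁅x, a⁆ * f = -(a * (e * x * f)) := by
  have haf : a * f = 0 := peirceCorner.mul_eq_zero_of_right H.mul_eq_zero ha
  rw [Ring.lie_def]
  linear_combination (norm := noncomm_ring) e * x * haf - ha.1 * (x * f) + ha.2 * (x * f)

theorem upper_lie_right (H : PeircePair e f) {b : P} (hb : b ∈ peirceCorner f f) (x : P) :
    e * ⁅x, b⁆ * f = e * x * f * b := by
  have heb : e * b = 0 := peirceCorner.mul_eq_zero_of_left H.mul_eq_zero hb
  rw [Ring.lie_def]
  linear_combination (norm := noncomm_ring) e * x * hb.2 - heb * (x * f) - e * x * hb.1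

theorem upper_lie_of_sub_left_mem_center (H : PeircePair e f) {d a : P}
    (ha : a ∈ peirceCorner e e) (hd : d - a ∈ Subring.center P) (x : P) :
    e * ⁅d, x⁆ * f = a * (e * x * f) := by
  rw [lie_eq_lie_of_sub_mem_center hd, ← lie_skew, mul_neg, neg_mul, H.upper_lie_left ha, neg_neg]

theorem upper_lie_of_sub_right_mem_center (H : PeircePair e f) {d b : P}
    (hb : b ∈ peirceCorner f f) (hd : d - b ∈ Subring.center P) (x : P) :
    e * ⁅d, x⁆ * f = -(e * x * f * b) := by
  rw [lie_eq_lie_of_sub_mem_center hd, ← lie_skew, mul_neg, neg_mul, H.upper_lie_right hb]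

theorem lie_mem_right_of_commute (H : PeircePair e f) {x b : P} (hx : Commute x e)
    (hb : b ∈ peirceCorner f f) : ⁅x, b⁆ ∈ peirceCorner f f :=
  peirceCorner.lie_mem_of_commute (H.commute_right_iff.2 hx) hb

theorem eq_zero_and_eq_zero_of_add_eq_zero (H : PeircePair e f) {a b : P}
    (ha : a ∈ peirceCorner e e) (hb : b ∈ peirceCorner f f) (h : a + b = 0) : a = 0 ∧ b = 0 := by
  have ha0 : a = 0 := by
    rw [← ha.1, eq_neg_of_add_eq_zero_left h, mul_neg,
      peirceCorner.mul_eq_zero_of_left H.mul_eq_zero hb, neg_zero]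
  exact ⟨ha0, by rwa [ha0, zero_add] at h⟩

theorem eq_zero_of_lie_add_eq_zero (H : PeircePair e f) {x d : P} (hd : Commute d e)
    (h : ⁅x, e⁆ + d = 0) : ⁅x, e⁆ = 0 ∧ d = 0 := by
  have hx : ⁅x, e⁆ = 0 := by
    rw [← lie_lie_lie_of_isIdempotentElem H.isIdempotentElem_left x, eq_neg_of_add_eq_zero_left h,
      neg_lie, hd.lie_eq, neg_zero, zero_lie]
  exact ⟨hx, by rwa [hx, zero_add] at h⟩

theorem eq_zero_of_mem_center_of_upper (H : PeircePair e f)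
    (faithful_left : ∀ a ∈ peirceCorner e e, (∀ m ∈ peirceCorner e f, a * m = 0) → a = 0)
    (faithful_right : ∀ b ∈ peirceCorner f f, (∀ m ∈ peirceCorner e f, m * b = 0) → b = 0) {z : P}
    (hz : z ∈ Subring.center P) (h : ∀ m ∈ peirceCorner e f, z * m = 0) : z = 0 := by
  have left : z * e = 0 :=
    faithful_left _ (peirceCorner.center_mul_mem hz H.left_mem) fun m hm => by
      rw [mul_assoc, hm.1, h m hm]
  have right : z * f = 0 :=
    faithful_right _ (peirceCorner.center_mul_mem hz H.right_mem) fun m hm => by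
      rw [← hz.left_comm, hm.2, h m hm]
  rw [← mul_one z, ← H.add_eq_one, mul_add, left, right, add_zero]

theorem eq_zero_of_forall_mul_mem_center (H : PeircePair e f)
    (faithful_left : ∀ a ∈ peirceCorner e e, (∀ m ∈ peirceCorner e f, a * m = 0) → a = 0)
    (faithful_right : ∀ b ∈ peirceCorner f f, (∀ m ∈ peirceCorner e f, m * b = 0) → b = 0) {x : P}
    (h : ∀ y, x * y ∈ Subring.center P) : x = 0 := by
  have hx : x ∈ Subring.center P := mul_one x ▸ h 1
  refine H.eq_zero_of_mem_center_of_upper faithful_left faithful_right hx fun m hm => ?_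
  rw [← hm.1, hx.left_comm, ← ((h m).comm e).eq, mul_assoc,
    peirceCorner.mul_eq_zero_of_right H.symm.mul_eq_zero hm, mul_zero]

theorem not_mem_center_left (H : PeircePair e f) (hf : f ∉ Subring.center P) :
    e ∉ Subring.center P := fun he =>
  hf (eq_sub_of_add_eq' H.add_eq_one ▸ sub_mem (one_mem _) he)

end PeircePair

/-- A Peirce pair satisfying the assumptions made on `G'`: the bimodule `ePf` is loyal, the centers
of the corners `ePe` and `fPf` are the projections of the center of `P`, and neither corner is
commutative. -/
structure LoyalPeircePair {P : Type*} [Ring P] (e f : P) : Prop extends PeircePair e f where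
  loyal : ∀ a ∈ peirceCorner e e, ∀ b ∈ peirceCorner f f,
    (∀ m ∈ peirceCorner e f, a * m * b = 0) → a = 0 ∨ b = 0
  exists_center_left : ∀ a ∈ peirceCorner e e, (∀ x ∈ peirceCorner e e, Commute a x) →
    ∃ z ∈ Subring.center P, z * e = a
  exists_center_right : ∀ b ∈ peirceCorner f f, (∀ x ∈ peirceCorner f f, Commute b x) →
    ∃ z ∈ Subring.center P, z * f = b
  exists_lie_ne_zero_left : ∃ a ∈ peirceCorner e e, ∃ a' ∈ peirceCorner e e, ⁅a, a'⁆ ≠ 0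
  exists_lie_ne_zero_right : ∃ b ∈ peirceCorner f f, ∃ b' ∈ peirceCorner f f, ⁅b, b'⁆ ≠ 0

namespace LoyalPeircePair

variable {P : Type*} [Ring P] {e f : P}

/- The diagonal corners are exchanged by passing to the opposite ring, which keeps the loyal
bimodule `ePf` in place; merely swapping `e` and `f` would replace it by `fPe`. -/
theorem op (H : LoyalPeircePair e f) :
    LoyalPeircePair (MulOpposite.op f) (MulOpposite.op e) where
  toPeircePair := H.toPeircePair.op
  loyal b hb a ha h := by
    simp only [← MulOpposite.unop_eq_zero_iff]
    refine (H.loyal _ (peirceCorner.unop_mem ha) _ (peirceCorner.unop_mem hb) fun m hm => ?_).symm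
    simpa [mul_assoc] using congrArg MulOpposite.unop (h _ (peirceCorner.op_mem hm))
  exists_center_left b hb hcomm := by
    obtain ⟨z, hz, hzb⟩ := H.exists_center_right _ (peirceCorner.unop_mem hb) fun x hx =>
      (hcomm _ (peirceCorner.op_mem hx)).unop
    exact ⟨.op z, op_mem_center hz, MulOpposite.unop_injective ((hz.comm f).eq.symm.trans hzb)⟩
  exists_center_right a ha hcomm := by
    obtain ⟨z, hz, hza⟩ := H.exists_center_left _ (peirceCorner.unop_mem ha) fun x hx =>
      (hcomm _ (peirceCorner.op_mem hx)).unop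
    exact ⟨.op z, op_mem_center hz, MulOpposite.unop_injective ((hz.comm e).eq.symm.trans hza)⟩
  exists_lie_ne_zero_left := by
    obtain ⟨b, hb, b', hb', hne⟩ := H.exists_lie_ne_zero_right
    exact ⟨_, peirceCorner.op_mem hb', _, peirceCorner.op_mem hb,
      fun h => hne (congrArg MulOpposite.unop h)⟩
  exists_lie_ne_zero_right := by
    obtain ⟨a, ha, a', ha', hne⟩ := H.exists_lie_ne_zero_left
    exact ⟨_, peirceCorner.op_mem ha', _, peirceCorner.op_mem ha,
      fun h => hne (congrArg MulOpposite.unop h)⟩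

theorem left_ne_zero (H : LoyalPeircePair e f) : e ≠ 0 := by
  obtain ⟨a, ha, a', -, hne⟩ := H.exists_lie_ne_zero_left
  rintro rfl
  exact hne (by rw [← ha.1, zero_mul, zero_lie])

theorem right_ne_zero (H : LoyalPeircePair e f) : f ≠ 0 :=
  fun h => H.op.left_ne_zero (congrArg MulOpposite.op h)

theorem faithful_left (H : LoyalPeircePair e f) {a : P} (ha : a ∈ peirceCorner e e)
    (h : ∀ m ∈ peirceCorner e f, a * m = 0) : a = 0 :=
  (H.loyal a ha f H.right_mem fun m hm => by rw [h m hm, zero_mul]).resolve_right H.right_ne_zero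

theorem faithful_right (H : LoyalPeircePair e f) {b : P} (hb : b ∈ peirceCorner f f)
    (h : ∀ m ∈ peirceCorner e f, m * b = 0) : b = 0 :=
  (H.loyal e H.left_mem b hb fun m hm => by rw [hm.1, h m hm]).resolve_left H.left_ne_zero

theorem eq_zero_of_mem_center_of_upper (H : LoyalPeircePair e f) {z : P}
    (hz : z ∈ Subring.center P) (h : ∀ m ∈ peirceCorner e f, z * m = 0) : z = 0 :=
  H.toPeircePair.eq_zero_of_mem_center_of_upper (fun _ => H.faithful_left)
    (fun _ => H.faithful_right) hz h

theorem eq_zero_or_eq_zero_of_center_mul_left (H : LoyalPeircePair e f) {z a : P}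
    (hz : z ∈ Subring.center P) (ha : a ∈ peirceCorner e e) (h : z * a = 0) : z = 0 ∨ a = 0 := by
  have hzf := H.loyal a ha (z * f) (peirceCorner.center_mul_mem hz H.right_mem) fun m hm => by
    rw [← hz.left_comm, mul_assoc a, hm.2, ← mul_assoc, h, zero_mul]
  refine hzf.symm.imp_left fun h0 => H.eq_zero_of_mem_center_of_upper hz fun m hm => ?_
  rw [← hm.2, hz.left_comm, h0, mul_zero]

theorem eq_zero_or_eq_zero_of_center_mul_right (H : LoyalPeircePair e f) {z b : P}
    (hz : z ∈ Subring.center P) (hb : b ∈ peirceCorner f f) (h : z * b = 0) : z = 0 ∨ b = 0 := by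
  simpa using H.op.eq_zero_or_eq_zero_of_center_mul_left (op_mem_center hz) (peirceCorner.op_mem hb)
    (congrArg MulOpposite.op ((hz.comm b).eq ▸ h))

theorem eq_zero_or_eq_zero_of_center_mul_center (H : LoyalPeircePair e f) {z w : P}
    (hz : z ∈ Subring.center P) (hw : w ∈ Subring.center P) (h : z * w = 0) : z = 0 ∨ w = 0 := by
  refine (H.eq_zero_or_eq_zero_of_center_mul_left hz
    (peirceCorner.center_mul_mem hw H.left_mem) (by rw [← mul_assoc, h, zero_mul])).imp_right
    fun hwe => ?_
  exact (H.eq_zero_or_eq_zero_of_center_mul_left hw H.left_mem hwe).resolve_right H.left_ne_zero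

theorem eq_zero_of_mul_left_mem_center (H : LoyalPeircePair e f) {z : P}
    (hz : z ∈ Subring.center P) (h : z * e ∈ Subring.center P) : z = 0 := by
  refine H.eq_zero_of_mem_center_of_upper hz fun m hm => ?_
  rw [← hm.1, ← mul_assoc, (h.comm m).eq, ← hz.left_comm,
    peirceCorner.mul_eq_zero_of_right H.symm.mul_eq_zero hm, mul_zero]

theorem eq_zero_of_mul_right_mem_center (H : LoyalPeircePair e f) {z : P}
    (hz : z ∈ Subring.center P) (h : z * f ∈ Subring.center P) : z = 0 := by
  simpa using H.op.eq_zero_of_mul_left_mem_center (op_mem_center hz)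
    (op_mem_center ((hz.comm f).eq ▸ h))

theorem exists_sub_left_mem_center (H : LoyalPeircePair e f) {d : P}
    (hd : ∀ b ∈ peirceCorner f f, Commute d b) :
    ∃ a ∈ peirceCorner e e, d - a ∈ Subring.center P := by
  have hdf : Commute d f := hd f H.right_mem
  have hde : Commute d e := H.commute_right_iff.1 hdf
  obtain ⟨z, hz, hzd⟩ := H.exists_center_right (f * d * f) (H.symm.mul_mul_mem_left d)
    fun b hb => by
      rw [← hdf.eq, mul_assoc, H.isIdempotentElem_right]
      exact (hd b hb).mul_left (peirceCorner.commute hb).symm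
  refine ⟨e * (d - z) * e, H.mul_mul_mem_left _, ?_⟩
  have hzf : f * z * f = f * d * f := by
    rw [← hzd, ← (hz.comm f).eq, mul_assoc, H.isIdempotentElem_right]
  have key : d - e * (d - z) * e = z := by
    linear_combination (norm := noncomm_ring)
      H.eq_add_of_commute hde - H.eq_add_of_commute (hz.comm e) - hzf
  rwa [key]

theorem exists_sub_right_mem_center (H : LoyalPeircePair e f) {d : P}
    (hd : ∀ a ∈ peirceCorner e e, Commute d a) :
    ∃ b ∈ peirceCorner f f, d - b ∈ Subring.center P := by
  obtain ⟨b, hb, h⟩ := H.op.exists_sub_left_mem_center (d := .op d) fun a ha =>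
    (hd _ (peirceCorner.unop_mem ha)).op
  exact ⟨b.unop, peirceCorner.unop_mem hb, unop_mem_center h⟩

theorem exists_sub_center_mul_left_mem_center (H : LoyalPeircePair e f) {d : P}
    (ha : ∀ a ∈ peirceCorner e e, Commute d a) (hb : ∀ b ∈ peirceCorner f f, Commute d b) :
    ∃ z ∈ Subring.center P, d - z * e ∈ Subring.center P := by
  obtain ⟨a, hae, hda⟩ := H.exists_sub_left_mem_center hb
  obtain ⟨z, hz, rfl⟩ := H.exists_center_left a hae fun x hx => by
    simpa using (ha x hx).sub_left (hda.comm x)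
  exact ⟨z, hz, hda⟩

theorem eq_zero_of_antisymm_left (H : LoyalPeircePair e f) {β : P → P}
    (hβ : ∀ m ∈ peirceCorner e f, β m ∈ peirceCorner e e)
    (h : ∀ y ∈ peirceCorner e f, ∀ z ∈ peirceCorner e f, β y * z + β z * y = 0) :
    ∀ m ∈ peirceCorner e f, β m = 0 := by
  intro z hz
  have transfer : ∀ b ∈ peirceCorner f f, ∀ y ∈ peirceCorner e f, β (z * b) * y = β z * y * b := by
    intro b hb y hy
    linear_combination (norm := noncomm_ring)
      h y hy (z * b) (peirceCorner.mul_mem hz hb) - h y hy z hz * b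
  obtain ⟨b, hb, b', hb', hne⟩ := H.exists_lie_ne_zero_right
  refine (H.loyal _ (hβ z hz) _ (peirceCorner.lie_mem hb hb') fun m hm => ?_).resolve_right hne
  rw [Ring.lie_def]
  linear_combination (norm := noncomm_ring)
    transfer b' hb' m hm * b - transfer b' hb' (m * b) (peirceCorner.mul_mem hm hb)

theorem eq_zero_of_antisymm_right (H : LoyalPeircePair e f) {β : P → P}
    (hβ : ∀ m ∈ peirceCorner e f, β m ∈ peirceCorner f f)
    (h : ∀ y ∈ peirceCorner e f, ∀ z ∈ peirceCorner e f, z * β y + y * β z = 0) :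
    ∀ m ∈ peirceCorner e f, β m = 0 := fun _ hm =>
  congrArg MulOpposite.unop <| H.op.eq_zero_of_antisymm_left (β := fun x => .op (β x.unop))
    (fun _ hx => peirceCorner.op_mem (hβ _ (peirceCorner.unop_mem hx)))
    (fun _ hy _ hz => congrArg MulOpposite.op
      (h _ (peirceCorner.unop_mem hy) _ (peirceCorner.unop_mem hz))) _ (peirceCorner.op_mem hm)

end LoyalPeircePair

theorem eq_zero_of_add_self_eq_zero (R : Type*) {V : Type*} [CommRing R] [Invertible (2 : R)]
    [AddCommGroup V] [Module R V] {x : V} (h : x + x = 0) : x = 0 :=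
  (isUnit_of_invertible (2 : R)).smul_eq_zero.1 (by rw [two_smul, h])

theorem smul_mem_center {R P : Type*} [CommRing R] [Ring P] [Algebra R P] (r : R) {z : P}
    (hz : z ∈ Subring.center P) : r • z ∈ Subring.center P :=
  Set.smul_mem_center r hz

theorem exists_linearMap_eq_of_sub_mul_mem_center {R P V : Type*} [CommRing R] [Ring P]
    [Algebra R P] [AddCommGroup V] [Module R V] {i : P}
    (hi : ∀ z ∈ Subring.center P, z * i ∈ Subring.center P → z = 0) (F : V →ₗ[R] P) {w : V → P}
    (hw : ∀ x, w x ∈ Subring.center P) (h : ∀ x, F x - w x * i ∈ Subring.center P) :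
    ∃ μ : V →ₗ[R] P, ⇑μ = w := by
  refine ⟨{ toFun := w, map_add' := fun x y => ?_, map_smul' := fun r x => ?_ }, rfl⟩
  · refine sub_eq_zero.1 (hi _ (sub_mem (hw _) (add_mem (hw x) (hw y))) ?_)
    convert sub_mem (add_mem (h x) (h y)) (h (x + y)) using 1
    rw [map_add]
    noncomm_ring
  · refine sub_eq_zero.1 (hi _ (sub_mem (hw _) (smul_mem_center r (hw x))) ?_)
    convert sub_mem (smul_mem_center r (h x)) (h (r • x)) using 1
    simp only [map_smul, smul_sub, sub_mul, smul_mul_assoc, RingHom.id_apply]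
    abel

/-! ### Bilinear maps with commuting trace -/

section CommutingTrace

variable {R P : Type*} [CommRing R] [Ring P] [Algebra R P]

/-- A symmetric `R`-bilinear map `q` whose trace `x ↦ q x x` is a commuting map. -/
structure HasCommutingTrace (q : P →ₗ[R] P →ₗ[R] P) : Prop where
  symm : ∀ x y, q x y = q y x
  lie_self : ∀ x, ⁅q x x, x⁆ = 0

/-- The polarized form of the standard commuting trace `x ↦ 2 (c x ^ 2 + μ(x) x)`. -/
def standardTrace (c : P) (μ : P →ₗ[R] P) : P →ₗ[R] P →ₗ[R] P :=
  LinearMap.mk₂ R (fun x y => c * (x * y + y * x) + (μ x * y + μ y * x))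
    (by intros; simp only [map_add]; noncomm_ring)
    (by intros; simp only [map_smul, smul_mul_assoc, mul_smul_comm, smul_add, mul_add])
    (by intros; simp only [map_add]; noncomm_ring)
    (by intros; simp only [map_smul, smul_mul_assoc, mul_smul_comm, smul_add, mul_add])

theorem standardTrace_apply (c : P) (μ : P →ₗ[R] P) (x y : P) :
    standardTrace c μ x y = c * (x * y + y * x) + (μ x * y + μ y * x) :=
  rfl

/-- The bilinear map `q` is a standard commuting trace with central coefficients, up to a bilinear
map with central values. -/
def IsProperTrace (q : P →ₗ[R] P →ₗ[R] P) : Prop :=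
  ∃ c ∈ Subring.center P, ∃ μ : P →ₗ[R] P, (∀ x, μ x ∈ Subring.center P) ∧
    ∀ x y, (q - standardTrace c μ) x y ∈ Subring.center P

theorem IsProperTrace.of_sub {q : P →ₗ[R] P →ₗ[R] P} {c : P} {μ : P →ₗ[R] P}
    (hc : c ∈ Subring.center P) (hμ : ∀ x, μ x ∈ Subring.center P)
    (h : IsProperTrace (q - standardTrace c μ)) : IsProperTrace q := by
  obtain ⟨c', hc', μ', hμ', hq⟩ := h
  refine ⟨c + c', add_mem hc hc', μ + μ', fun x => add_mem (hμ x) (hμ' x), fun x y => ?_⟩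
  convert hq x y using 1
  simp only [LinearMap.sub_apply, standardTrace_apply, LinearMap.add_apply]
  noncomm_ring

theorem IsProperTrace.of_forall_mem_center {q : P →ₗ[R] P →ₗ[R] P}
    (h : ∀ x y, q x y ∈ Subring.center P) : IsProperTrace q :=
  ⟨0, zero_mem _, 0, fun _ => zero_mem _, fun x y => by
    simpa [standardTrace_apply] using h x y⟩

/-- The bilinear map `q` transported to the opposite ring. -/
def opTrace (q : P →ₗ[R] P →ₗ[R] P) : Pᵐᵒᵖ →ₗ[R] Pᵐᵒᵖ →ₗ[R] Pᵐᵒᵖ :=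
  (q.compl₁₂ (MulOpposite.opLinearEquiv R).symm.toLinearMap
    (MulOpposite.opLinearEquiv R).symm.toLinearMap).compr₂
    (MulOpposite.opLinearEquiv R).toLinearMap

theorem opTrace_apply (q : P →ₗ[R] P →ₗ[R] P) (x y : Pᵐᵒᵖ) :
    opTrace q x y = MulOpposite.op (q x.unop y.unop) :=
  rfl

theorem IsProperTrace.of_op {q : P →ₗ[R] P →ₗ[R] P} (h : IsProperTrace (opTrace q)) :
    IsProperTrace q := by
  obtain ⟨c, hc, μ, hμ, hq⟩ := h
  refine ⟨c.unop, unop_mem_center hc, (MulOpposite.opLinearEquiv R).symm.toLinearMap ∘ₗ μ ∘ₗ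
    (MulOpposite.opLinearEquiv R).toLinearMap, fun x => unop_mem_center (hμ _), fun x y => ?_⟩
  convert unop_mem_center (hq (.op x) (.op y)) using 1
  simp [standardTrace_apply, opTrace_apply, (unop_mem_center hc).comm (x * y + y * x) |>.eq,
    mul_add, add_mul, (unop_mem_center (hμ (.op x))).comm y |>.eq,
    (unop_mem_center (hμ (.op y))).comm x |>.eq, add_comm]

namespace HasCommutingTrace

variable {q : P →ₗ[R] P →ₗ[R] P}

theorem op (hq : HasCommutingTrace q) : HasCommutingTrace (opTrace q) where
  symm _ _ := congrArg MulOpposite.op (hq.symm _ _)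
  lie_self x := (commute_iff_lie_eq.2 (hq.lie_self x.unop)).op.lie_eq

theorem sub_standardTrace (hq : HasCommutingTrace q) {c : P} (hc : c ∈ Subring.center P)
    {μ : P →ₗ[R] P} (hμ : ∀ x, μ x ∈ Subring.center P) :
    HasCommutingTrace (q - standardTrace c μ) where
  symm x y := by
    simp only [LinearMap.sub_apply, standardTrace_apply, hq.symm x y, add_comm]
  lie_self x := by
    have standard : Commute (standardTrace c μ x x) x := by
      have hxx : Commute (x * x) x := (Commute.refl x).mul_left (Commute.refl x)
      have hμx : Commute (μ x * x) x := ((hμ x).comm x).mul_left (Commute.refl x)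
      exact ((hc.comm x).mul_left (hxx.add_left hxx)).add_left (hμx.add_left hμx)
    exact ((commute_iff_lie_eq.2 (hq.lie_self x)).sub_left standard).lie_eq

theorem cyclic [Invertible (2 : R)] (hq : HasCommutingTrace q) (x y z : P) :
    ⁅q x y, z⁆ + ⁅q y z, x⁆ + ⁅q x z, y⁆ = 0 := by
  refine eq_zero_of_add_self_eq_zero R ?_
  have polarization : ∀ u v w : P, ⁅q (u + v + w) (u + v + w), u + v + w⁆
      - ⁅q (u + v) (u + v), u + v⁆ - ⁅q (v + w) (v + w), v + w⁆ - ⁅q (u + w) (u + w), u + w⁆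
      + ⁅q u u, u⁆ + ⁅q v v, v⁆ + ⁅q w w, w⁆
      = ⁅q u v, w⁆ + ⁅q v w, u⁆ + ⁅q u w, v⁆ + (⁅q u v, w⁆ + ⁅q v w, u⁆ + ⁅q u w, v⁆) := by
    intro u v w
    simp only [map_add, LinearMap.add_apply, add_lie, lie_add, hq.symm v u, hq.symm w u,
      hq.symm w v]
    abel
  simpa only [hq.lie_self, sub_zero, add_zero] using (polarization x y z).symm

theorem commute_apply_of_apply_self_mem_center [Invertible (2 : R)] (hq : HasCommutingTrace q)
    {x : P} (hx : q x x ∈ Subring.center P) (y : P) : Commute (q x y) x := by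
  have cyc := hq.cyclic x x y
  rw [mem_center_iff_forall_lie_eq_zero.1 hx y, zero_add] at cyc
  exact commute_iff_lie_eq.2 (eq_zero_of_add_self_eq_zero R cyc)

end HasCommutingTrace

end CommutingTrace

namespace LoyalPeircePair

theorem eq_zero_of_upper_cyclic_of_mem_upper {P : Type*} [Ring P] {e f : P}
    (H : LoyalPeircePair e f) {w : P → P → P} (hw : ∀ x y, w x y ∈ Subring.center P)
    (h : ∀ x ∈ peirceCorner e f, ∀ y ∈ peirceCorner e f, ∀ z ∈ peirceCorner e f,
      w x y * z + w y z * x + w x z * y = 0)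
    {x y : P} (hx : x ∈ peirceCorner e f) (hy : y ∈ peirceCorner e f) : w x y = 0 := by
  have transfer : ∀ b ∈ peirceCorner f f, w (x * b) y * f = w x y * b := by
    intro b hb
    refine sub_eq_zero.1 (H.eq_zero_of_antisymm_right (β := fun y => w (x * b) y * f - w x y * b)
      (fun m _ => sub_mem (peirceCorner.center_mul_mem (hw _ _) H.right_mem)
        (peirceCorner.center_mul_mem (hw _ _) hb)) (fun y hy z hz => ?_) y hy)
    linear_combination (norm := noncomm_ring)
      h (x * b) (peirceCorner.mul_mem hx hb) y hy z hz - h x hx y hy z hz * b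
        - (hw (x * b) y).left_comm z f - (hw (x * b) z).left_comm y f
        + (hw x y).left_comm z b + (hw x z).left_comm y b
        + w (x * b) y * hz.2 + w (x * b) z * hy.2
  obtain ⟨b, hb, b', hb', hne⟩ := H.exists_lie_ne_zero_right
  refine (H.eq_zero_or_eq_zero_of_center_mul_right (hw x y) (peirceCorner.lie_mem hb hb')
    ?_).resolve_right hne
  rw [Ring.lie_def]
  linear_combination (norm := noncomm_ring) b' * transfer b hb - transfer b hb * b'
    + (hw (x * b) y).left_comm b' f - (hw x y).left_comm b' b
    + w (x * b) y * (peirceCorner.commute hb').symm.eq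

theorem eq_zero_of_upper_cyclic {P : Type*} [Ring P] {e f : P} (H : LoyalPeircePair e f)
    {w : P → P → P} (hw : ∀ x y, w x y ∈ Subring.center P)
    (h : ∀ x y z, w x y * (e * z * f) + w y z * (e * x * f) + w x z * (e * y * f) = 0) (x y : P) :
    w x y = 0 := by
  have upper_upper : ∀ m ∈ peirceCorner e f, ∀ m' ∈ peirceCorner e f, w m m' = 0 := by
    refine fun m hm m' hm' => H.eq_zero_of_upper_cyclic_of_mem_upper hw
      (fun x hx y hy z hz => ?_) hm hm'
    simpa only [hx.1, hx.2, hy.1, hy.2, hz.1, hz.2] using h x y z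
  have upper_right : ∀ x, ∀ m ∈ peirceCorner e f, w x m = 0 := by
    intro x m hm
    have hwe := H.eq_zero_of_antisymm_left (β := fun m => w x m * e)
      (fun m _ => peirceCorner.center_mul_mem (hw x m) H.left_mem) (fun m hm m' hm' => ?_) m hm
    · exact H.eq_zero_of_mul_left_mem_center (hw x m) (hwe ▸ zero_mem _)
    · simpa only [mul_assoc, hm.1, hm.2, hm'.1, hm'.2, upper_upper m hm m' hm', zero_mul,
        add_zero] using h x m m'
  refine H.eq_zero_of_mem_center_of_upper (hw x y) fun m hm => ?_
  simpa only [hm.1, hm.2, upper_right _ m hm, zero_mul, add_zero] using h x y m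

variable {R P : Type*} [CommRing R] [Invertible (2 : R)] [Ring P] [Algebra R P] {e f : P}
  {q : P →ₗ[R] P →ₗ[R] P}

theorem apply_left_mem_center_of_diagonal (H : LoyalPeircePair e f) (hq : HasCommutingTrace q)
    (hab : ∀ a ∈ peirceCorner e e, ∀ b ∈ peirceCorner f f, q a b ∈ Subring.center P)
    (hdiag : ∀ x y, Commute (q x y) e) {a : P} (ha : a ∈ peirceCorner e e) (x : P) :
    q a x ∈ Subring.center P := by
  have commute_right : ∀ x, ∀ b ∈ peirceCorner f f, Commute (q a x) b := by
    intro x b hb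
    have cyc := hq.cyclic a b x
    rw [mem_center_iff_forall_lie_eq_zero.1 (hab a ha b hb) x, zero_add] at cyc
    exact commute_iff_lie_eq.2 (H.eq_zero_and_eq_zero_of_add_eq_zero
      (peirceCorner.lie_mem_of_commute (hdiag b x) ha)
      (H.lie_mem_right_of_commute (hdiag a x) hb) cyc).2
  choose α hα hqα using fun x => H.exists_sub_left_mem_center (commute_right x)
  have upper_cyclic : ∀ m ∈ peirceCorner e f, ∀ x, α m * (e * x * f) + α x * m = 0 := by
    intro m hm x
    have cyc := congrArg (fun t => e * t * f) (hq.cyclic a m x)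
    simpa only [mul_add, add_mul, mul_zero, zero_mul,
      H.upper_lie_of_sub_left_mem_center (hα _) (hqα _), H.upper_lie_left ha,
      H.upper_eq_zero_of_commute (hdiag m x), neg_zero, add_zero, hm.1, hm.2] using cyc
  have upper_zero : ∀ m ∈ peirceCorner e f, α m = 0 :=
    H.eq_zero_of_antisymm_left (fun m _ => hα m) fun m hm m' hm' => by
      simpa only [hm'.1, hm'.2] using upper_cyclic m hm m'
  have zero : α x = 0 := H.faithful_left (hα x) fun m hm => by
    simpa only [upper_zero m hm, zero_mul, zero_add] using upper_cyclic m hm x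
  simpa only [zero, sub_zero] using hqα x

theorem apply_right_mem_center_of_diagonal (H : LoyalPeircePair e f) (hq : HasCommutingTrace q)
    (hab : ∀ a ∈ peirceCorner e e, ∀ b ∈ peirceCorner f f, q a b ∈ Subring.center P)
    (hdiag : ∀ x y, Commute (q x y) e) {b : P} (hb : b ∈ peirceCorner f f) (x : P) :
    q b x ∈ Subring.center P :=
  unop_mem_center <| H.op.apply_left_mem_center_of_diagonal hq.op
    (fun b hb a ha => op_mem_center
      (hq.symm a.unop b.unop ▸ hab _ (peirceCorner.unop_mem ha) _ (peirceCorner.unop_mem hb)))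
    (fun x y => (H.commute_right_iff.2 (hdiag x.unop y.unop)).op) (peirceCorner.op_mem hb) (.op x)

theorem apply_mem_center_of_apply_left_mem_center (H : LoyalPeircePair e f)
    (hq : HasCommutingTrace q)
    (hab : ∀ a ∈ peirceCorner e e, ∀ b ∈ peirceCorner f f, q a b ∈ Subring.center P)
    (he : ∀ x, q e x ∈ Subring.center P) (x y : P) : q x y ∈ Subring.center P := by
  have commute_of_central : ∀ u, (∀ x, q u x ∈ Subring.center P) → ∀ x y, Commute (q x y) u := by
    intro u hu x y
    simpa only [mem_center_iff_forall_lie_eq_zero.1 (hu _), zero_add, add_zero,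
      ← commute_iff_lie_eq] using hq.cyclic u x y
  have hdiag := commute_of_central e he
  choose w hw hqw using fun x y => H.exists_sub_center_mul_left_mem_center
    (fun a ha => commute_of_central a (H.apply_left_mem_center_of_diagonal hq hab hdiag ha) x y)
    (fun b hb => commute_of_central b (H.apply_right_mem_center_of_diagonal hq hab hdiag hb) x y)
  have w_zero : ∀ x y, w x y = 0 := H.eq_zero_of_upper_cyclic hw fun x y z => by
    have upper : ∀ x y z, e * ⁅q x y, z⁆ * f = w x y * (e * z * f) := fun x y z => by
      rw [H.upper_lie_of_sub_left_mem_center (peirceCorner.center_mul_mem (hw x y) H.left_mem)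
        (hqw x y), mul_assoc, (H.mul_mul_mem_upper z).1]
    simpa only [mul_add, add_mul, mul_zero, zero_mul, upper] using
      congrArg (fun t => e * t * f) (hq.cyclic x y z)
  simpa only [w_zero, zero_mul, sub_zero] using hqw x y

theorem isProperTrace_of_apply_left_corner_mem_center (H : LoyalPeircePair e f)
    (hq : HasCommutingTrace q)
    (hab : ∀ a ∈ peirceCorner e e, ∀ b ∈ peirceCorner f f, q a b ∈ Subring.center P)
    (hea : ∀ a ∈ peirceCorner e e, q e a ∈ Subring.center P) : IsProperTrace q := by
  have hdiag := hq.commute_apply_of_apply_self_mem_center (hea e H.left_mem)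
  have commute_of_central : ∀ u, q e u ∈ Subring.center P →
      (∀ x, Commute (⁅q e x, u⁆) e) → ∀ x, Commute (q e x) u := by
    intro u hu hcomm x
    have cyc := hq.cyclic e u x
    rw [mem_center_iff_forall_lie_eq_zero.1 hu x, zero_add] at cyc
    exact commute_iff_lie_eq.2 (H.eq_zero_of_lie_add_eq_zero (hcomm x) cyc).2
  choose w hw hqw using fun x => H.exists_sub_center_mul_left_mem_center
    (fun a ha => commute_of_central a (hea a ha) (fun x => peirceCorner.commute
      (peirceCorner.lie_mem_of_commute (hdiag x) ha)) x)
    (fun b hb => commute_of_central b (hab e H.left_mem b hb) (fun x =>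
      H.commute_left_of_mem_right (H.lie_mem_right_of_commute (hdiag x) hb)) x)
  obtain ⟨μ, rfl⟩ := exists_linearMap_eq_of_sub_mul_mem_center
    (fun z hz => H.eq_zero_of_mul_left_mem_center hz) (q e) hw hqw
  have μ_zero : ∀ u, q e u ∈ Subring.center P → μ u = 0 := fun u hu =>
    H.eq_zero_of_mul_left_mem_center (hw u) (by simpa using sub_mem hu (hqw u))
  refine .of_sub (zero_mem _) hw (.of_forall_mem_center
    (H.apply_mem_center_of_apply_left_mem_center (hq.sub_standardTrace (zero_mem _) hw) ?_ ?_))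
  · intro a ha b hb
    simpa [standardTrace_apply, μ_zero a (hea a ha), μ_zero b (hab e H.left_mem b hb)] using
      hab a ha b hb
  · intro x
    simpa [standardTrace_apply, μ_zero e (hea e H.left_mem)] using hqw x

theorem apply_left_corner_mem_center_of_apply_self_mem_center (H : LoyalPeircePair e f)
    (hq : HasCommutingTrace q)
    (hab : ∀ a ∈ peirceCorner e e, ∀ b ∈ peirceCorner f f, q a b ∈ Subring.center P)
    (hee : q e e ∈ Subring.center P) {a : P} (ha : a ∈ peirceCorner e e) :
    q e a ∈ Subring.center P := by
  have hdiag := hq.commute_apply_of_apply_self_mem_center hee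
  have central_lie : ∀ a ∈ peirceCorner e e, ∀ b ∈ peirceCorner f f, ∀ x : P, ⁅q a b, x⁆ = 0 :=
    fun a ha b hb => mem_center_iff_forall_lie_eq_zero.1 (hab a ha b hb)
  have upper_apply_left : ∀ a ∈ peirceCorner e e, ∀ x, e * q a x * f = a * (e * q f x * f) := by
    intro a ha x
    have cyc := congrArg (fun t => e * t * f) (hq.cyclic a f x)
    simp only [central_lie a ha f H.right_mem, mul_add, add_mul, mul_zero, zero_mul, zero_add,
      H.upper_lie_left ha, H.upper_lie_right H.right_mem, (H.mul_mul_mem_upper _).2] at cyc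
    exact (neg_add_eq_zero.1 cyc).symm
  have upper_apply_left_zero : ∀ x, e * q a x * f = 0 := by
    intro x
    rw [upper_apply_left a ha, ← (H.mul_mul_mem_upper _).1, ← upper_apply_left e H.left_mem,
      H.upper_eq_zero_of_commute (hdiag x), mul_zero]
  obtain ⟨α, hα, hqα⟩ := H.exists_sub_left_mem_center (d := q e a) fun b hb => by
    simpa only [central_lie a ha b hb, central_lie e H.left_mem b hb, add_zero,
      ← commute_iff_lie_eq] using hq.cyclic e a b
  have α_zero : α = 0 := H.faithful_left hα fun m hm => by
    have cyc := congrArg (fun t => e * t * f) (hq.cyclic e a m)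
    simpa only [mul_add, add_mul, mul_zero, zero_mul, H.upper_lie_of_sub_left_mem_center hα hqα,
      H.upper_lie_left H.left_mem, H.upper_lie_left ha, upper_apply_left_zero,
      H.upper_eq_zero_of_commute (hdiag m), neg_zero, add_zero, hm.1, hm.2] using cyc
  simpa only [α_zero, sub_zero] using hqα

theorem isProperTrace_of_apply_left_right_mem_center (H : LoyalPeircePair e f)
    (hq : HasCommutingTrace q)
    (hab : ∀ a ∈ peirceCorner e e, ∀ b ∈ peirceCorner f f, q a b ∈ Subring.center P) :
    IsProperTrace q := by
  have hee : Commute (q e e) e := commute_iff_lie_eq.2 (hq.lie_self e)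
  have commute_of : ∀ u, Commute (⁅q e e, u⁆) e → Commute (q e e) u := by
    intro u hu
    have cyc := hq.cyclic e e u
    rw [add_assoc, ← add_lie, add_comm] at cyc
    exact commute_iff_lie_eq.2 (H.eq_zero_of_lie_add_eq_zero hu cyc).2
  obtain ⟨c, hc, hqc⟩ := H.exists_sub_center_mul_left_mem_center
    (fun a ha => commute_of a (peirceCorner.commute (peirceCorner.lie_mem_of_commute hee ha)))
    (fun b hb => commute_of b (H.commute_left_of_mem_right (H.lie_mem_right_of_commute hee hb)))
  have hhalf : ⅟(2 : R) • c ∈ Subring.center P := smul_mem_center _ hc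
  have hq' := hq.sub_standardTrace (μ := 0) hhalf fun _ => zero_mem _
  have hab' : ∀ a ∈ peirceCorner e e, ∀ b ∈ peirceCorner f f,
      (q - standardTrace (⅟(2 : R) • c) (0 : P →ₗ[R] P)) a b ∈ Subring.center P := by
    intro a ha b hb
    simpa [standardTrace_apply, H.left_mul_right_eq_zero ha hb, H.symm.left_mul_right_eq_zero hb ha]
      using hab a ha b hb
  have hee' : (q - standardTrace (⅟(2 : R) • c) (0 : P →ₗ[R] P)) e e ∈ Subring.center P := by
    convert hqc using 1
    simp only [LinearMap.sub_apply, standardTrace_apply, LinearMap.zero_apply, zero_mul, add_zero,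
      H.isIdempotentElem_left, ← two_smul R e, smul_mul_smul_comm, invOf_mul_self, one_smul]
  exact .of_sub hhalf (fun _ => zero_mem _) (H.isProperTrace_of_apply_left_corner_mem_center hq'
    hab' fun a => H.apply_left_corner_mem_center_of_apply_self_mem_center hq' hab' hee')

end LoyalPeircePair

/-- Every commuting `R`-linear map on the corner `ePe` is proper. Maps on the corner are represented
by maps on `P` that preserve it, and the center of `ePe` is expressed as a centralizer. -/
def CommutingMapsProper (R : Type*) {P : Type*} [CommRing R] [Ring P] [Algebra R P] (e : P) :
    Prop :=
  ∀ F : P →ₗ[R] P, (∀ a ∈ peirceCorner e e, F a ∈ peirceCorner e e) →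
    (∀ a ∈ peirceCorner e e, Commute (F a) a) →
    ∃ z ∈ Subring.center P, ∀ a ∈ peirceCorner e e, ∀ x ∈ peirceCorner e e,
      Commute (F a - z * a) x

theorem CommutingMapsProper.op {R P : Type*} [CommRing R] [Ring P] [Algebra R P] {e : P}
    (h : CommutingMapsProper R e) : CommutingMapsProper R (MulOpposite.op e) := by
  intro F hF hcomm
  obtain ⟨z, hz, hzF⟩ := h ((MulOpposite.opLinearEquiv R).symm.toLinearMap ∘ₗ F ∘ₗ
    (MulOpposite.opLinearEquiv R).toLinearMap)
    (fun a ha => peirceCorner.unop_mem (hF _ (peirceCorner.op_mem ha)))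
    (fun a ha => (hcomm _ (peirceCorner.op_mem ha)).unop)
  refine ⟨.op z, op_mem_center hz, fun a ha x hx => ?_⟩
  have := (hzF _ (peirceCorner.unop_mem ha) _ (peirceCorner.unop_mem hx)).op
  rwa [(hz.comm _).eq] at this

namespace PeircePair

variable {R P : Type*} [CommRing R] [Invertible (2 : R)] [Ring P] [Algebra R P] {e f : P}
  {q : P →ₗ[R] P →ₗ[R] P}

theorem commute_apply_right_corner (H : PeircePair e f) (hq : HasCommutingTrace q) {b : P}
    (hb : b ∈ peirceCorner f f) : Commute (q e b) e := by
  have hee : Commute (q e e) e := commute_iff_lie_eq.2 (hq.lie_self e)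
  have cyc := hq.cyclic e e b
  rw [add_assoc, ← add_lie, add_comm] at cyc
  have twice := (H.eq_zero_of_lie_add_eq_zero
    (H.commute_left_of_mem_right (H.lie_mem_right_of_commute hee hb)) cyc).1
  rw [add_lie] at twice
  exact commute_iff_lie_eq.2 (eq_zero_of_add_self_eq_zero R twice)

theorem commute_apply_left_corner (H : PeircePair e f) (hq : HasCommutingTrace q) {a : P}
    (ha : a ∈ peirceCorner e e) : Commute (q a e) e := by
  have haf : ⁅q a f, e⁆ = 0 := by
    rw [hq.symm, (H.commute_right_iff.1 (H.symm.commute_apply_right_corner hq ha)).lie_eq]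
  have hfe : ⁅q f e, a⁆ ∈ peirceCorner e e := peirceCorner.lie_mem_of_commute
    (hq.symm e f ▸ H.commute_apply_right_corner hq H.right_mem) ha
  have cyc := hq.cyclic a f e
  rw [haf, zero_add, add_comm] at cyc
  exact H.commute_right_iff.1 (commute_iff_lie_eq.2
    (H.symm.eq_zero_of_lie_add_eq_zero (H.symm.commute_left_of_mem_right hfe) cyc).1)

theorem commute_apply_left_right (H : PeircePair e f) (hq : HasCommutingTrace q) {a b : P}
    (ha : a ∈ peirceCorner e e) (hb : b ∈ peirceCorner f f) : Commute (q a b) e := by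
  have hbe : ⁅q b e, a⁆ ∈ peirceCorner e e := peirceCorner.lie_mem_of_commute
    (hq.symm e b ▸ H.commute_apply_right_corner hq hb) ha
  have hae : ⁅q a e, b⁆ ∈ peirceCorner f f :=
    H.lie_mem_right_of_commute (H.commute_apply_left_corner hq ha) hb
  have cyc := hq.cyclic a b e
  rw [add_assoc] at cyc
  exact commute_iff_lie_eq.2 (H.eq_zero_of_lie_add_eq_zero
    ((peirceCorner.commute hbe).add_left (H.commute_left_of_mem_right hae)) cyc).1

theorem commute_apply_left_right_left (H : PeircePair e f) (hq : HasCommutingTrace q) {a b : P}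
    (ha : a ∈ peirceCorner e e) (hb : b ∈ peirceCorner f f) : Commute (q a b) a := by
  have hlie : ⁅q a b, a⁆ ∈ peirceCorner e e :=
    peirceCorner.lie_mem_of_commute (H.commute_apply_left_right hq ha hb) ha
  have hqaab : e * ⁅q a a, b⁆ * e = 0 := by
    rw [Ring.lie_def]
    linear_combination (norm := noncomm_ring)
      e * q a a * peirceCorner.mul_eq_zero_of_right H.symm.mul_eq_zero hb
        - peirceCorner.mul_eq_zero_of_left H.mul_eq_zero hb * (q a a * e)
  have cyc := congrArg (fun t => e * t * e) (hq.cyclic a a b)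
  simp only [mul_add, add_mul, hqaab, hlie.1, hlie.2, mul_zero, zero_mul, zero_add] at cyc
  exact commute_iff_lie_eq.2 (eq_zero_of_add_self_eq_zero R cyc)

theorem commute_apply_left_right_right (H : PeircePair e f) (hq : HasCommutingTrace q) {a b : P}
    (ha : a ∈ peirceCorner e e) (hb : b ∈ peirceCorner f f) : Commute (q a b) b :=
  hq.symm b a ▸ H.symm.commute_apply_left_right_left hq hb ha

end PeircePair

theorem PeircePair.upper_lie_of_sub_sub_mem_center {P : Type*} [Ring P] {e f : P}
    (H : PeircePair e f) {d z a b m : P} (hz : z ∈ Subring.center P) (ha : a ∈ peirceCorner e e)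
    (hb : b ∈ peirceCorner f f) (hd : d - z * a - b ∈ Subring.center P)
    (hm : m ∈ peirceCorner e f) : e * ⁅d, m⁆ * f = z * (a * m) - m * b := by
  have hza : z * a ∈ peirceCorner e e := peirceCorner.center_mul_mem hz ha
  have left := H.upper_lie_of_sub_left_mem_center hza (sub_self (z * a) ▸ zero_mem _) m
  have right := H.upper_lie_of_sub_right_mem_center hb hd m
  rw [sub_lie, hm.1, hm.2] at right
  rw [hm.1, hm.2] at left
  linear_combination (norm := noncomm_ring) left + right

namespace LoyalPeircePair

theorem eq_zero_of_upper_scaling {P : Type*} [Ring P] {e f : P} (H : LoyalPeircePair e f)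
    {X : P → P} (hX : ∀ a ∈ peirceCorner e e, X a ∈ peirceCorner f f)
    (h : ∀ a ∈ peirceCorner e e, ∀ m ∈ peirceCorner e f, m * X a = a * m * X e) {a : P}
    (ha : a ∈ peirceCorner e e) : X a = 0 := by
  have Xe_zero : X e = 0 := by
    obtain ⟨a, ha, a', ha', hne⟩ := H.exists_lie_ne_zero_left
    refine (H.loyal _ (peirceCorner.lie_mem ha ha') _ (hX e H.left_mem) fun m hm => ?_).resolve_left
      hne
    rw [Ring.lie_def]
    linear_combination (norm := noncomm_ring)
      a' * h a ha m hm - h a ha (a' * m) (peirceCorner.mul_mem ha' hm)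
  exact H.faithful_right (hX a ha) fun m hm => by rw [h a ha m hm, Xe_zero, mul_zero]

variable {R P : Type*} [CommRing R] [Invertible (2 : R)] [Ring P] [Algebra R P] {e f : P}
  {q : P →ₗ[R] P →ₗ[R] P}

theorem exists_center_sub_sub_mem_center (H : LoyalPeircePair e f)
    (hproper : CommutingMapsProper R e) (hq : HasCommutingTrace q) {b : P}
    (hb : b ∈ peirceCorner f f) : ∃ z ∈ Subring.center P, ∀ a ∈ peirceCorner e e,
      ∃ b' ∈ peirceCorner f f, q a b - z * a - b' ∈ Subring.center P := by
  have fixed : ∀ a ∈ peirceCorner e e, ∀ x ∈ peirceCorner e e,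
      ⁅e * q a b * e, x⁆ = ⁅q a b, x⁆ := by
    intro a ha x hx
    have hqe := (H.commute_apply_left_right hq ha hb).eq
    rw [← hqe, mul_assoc, H.isIdempotentElem_left, Ring.lie_def, Ring.lie_def]
    linear_combination (norm := noncomm_ring) q a b * hx.1 - x * hqe - hx.2 * q a b
  obtain ⟨z, hz, hzF⟩ := hproper
    ((LinearMap.mulLeft R e).comp ((LinearMap.mulRight R e).comp (q.flip b)))
    (fun a _ => by simpa [mul_assoc] using H.mul_mul_mem_left (q a b))
    (fun a ha => commute_iff_lie_eq.2 (by
      simpa [← mul_assoc, fixed a ha a ha] using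
        (H.commute_apply_left_right_left hq ha hb).lie_eq))
  refine ⟨z, hz, fun a ha => H.exists_sub_right_mem_center fun x hx => commute_iff_lie_eq.2 ?_⟩
  simpa [← mul_assoc, sub_lie, fixed a ha x hx] using (hzF a ha x hx).lie_eq

theorem right_part_eq_mul (H : LoyalPeircePair e f) (hq : HasCommutingTrace q) {θ : P → P}
    {ψ : P → P → P} (hθ : ∀ b ∈ peirceCorner f f, θ b ∈ Subring.center P)
    (hψ : ∀ b ∈ peirceCorner f f, ∀ a ∈ peirceCorner e e, ψ b a ∈ peirceCorner f f)
    (h : ∀ b ∈ peirceCorner f f, ∀ a ∈ peirceCorner e e,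
      q a b - θ b * a - ψ b a ∈ Subring.center P)
    {a b : P} (ha : a ∈ peirceCorner e e) (hb : b ∈ peirceCorner f f) : ψ b a = ψ f a * b := by
  refine sub_eq_zero.1 (H.eq_zero_of_upper_scaling (X := fun a => ψ b a - ψ f a * b)
    (fun a ha => sub_mem (hψ b hb a ha) (peirceCorner.mul_mem (hψ f H.right_mem a ha) hb))
    (fun a ha m hm => ?_) ha)
  have upper_cyclic : ∀ a ∈ peirceCorner e e, ∀ b ∈ peirceCorner f f,
      e * q a m * f * b - a * (e * q m b * f) + (θ b * (a * m) - m * ψ b a) = 0 := by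
    intro a ha b hb
    simpa only [mul_add, add_mul, mul_zero, zero_mul, H.upper_lie_right hb, H.upper_lie_left ha,
      H.upper_lie_of_sub_sub_mem_center (hθ b hb) ha (hψ b hb a ha) (h b hb a ha) hm,
      ← sub_eq_add_neg] using congrArg (fun t => e * t * f) (hq.cyclic a m b)
  have factored : ∀ a ∈ peirceCorner e e, m * (ψ b a - ψ f a * b) =
      a * (e * q m f * f * b - e * q m b * f + θ b * m - θ f * m * b) := by
    intro a ha
    linear_combination (norm := noncomm_ring)
      upper_cyclic a ha f H.right_mem * b - upper_cyclic a ha b hb - e * q a m * f * hb.1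
        + (hθ b hb).left_comm a m - (hθ f H.right_mem).left_comm a m * b
  rw [factored a ha, mul_assoc a m, factored e H.left_mem, ← mul_assoc a e, ha.2]

theorem exists_center_sub_sub_center_mem_center (H : LoyalPeircePair e f)
    (hproper : CommutingMapsProper R e) (hq : HasCommutingTrace q) :
    ∃ θ κ : P → P, (∀ b ∈ peirceCorner f f, θ b ∈ Subring.center P) ∧
      (∀ a ∈ peirceCorner e e, κ a ∈ Subring.center P) ∧
      ∀ a ∈ peirceCorner e e, ∀ b ∈ peirceCorner f f,
        q a b - θ b * a - κ a * b ∈ Subring.center P := by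
  choose! θ hθ ψ hψ hqψ using fun b => H.exists_center_sub_sub_mem_center hproper hq (b := b)
  have ψ_commute : ∀ a ∈ peirceCorner e e, ∀ b ∈ peirceCorner f f, ⁅ψ f a, b⁆ * b = 0 := by
    intro a ha b hb
    have hab : Commute a b := by
      rw [commute_iff_eq, H.left_mul_right_eq_zero ha hb, H.symm.left_mul_right_eq_zero hb ha]
    have hψb : Commute (ψ b a) b := by
      simpa using ((H.commute_apply_left_right_right hq ha hb).sub_left
        (((hθ b hb).comm b).mul_left hab)).sub_left ((hqψ b hb a ha).comm b)
    rw [H.right_part_eq_mul hq hθ hψ hqψ ha hb] at hψb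
    rw [Ring.lie_def, sub_mul, hψb.eq, mul_assoc, sub_self]
  have exists_κ : ∀ a ∈ peirceCorner e e, ∃ z ∈ Subring.center P, z * f = ψ f a := by
    intro a ha
    have hψf := hψ f H.right_mem a ha
    refine H.exists_center_right _ hψf fun b hb => commute_iff_lie_eq.2 ?_
    have shifted := ψ_commute a ha (b + f) (add_mem hb H.right_mem)
    rw [lie_add, (peirceCorner.commute hψf).lie_eq, add_zero, mul_add, ψ_commute a ha b hb,
      zero_add] at shifted
    rwa [(peirceCorner.lie_mem hψf hb).2] at shifted
  choose! κ hκ hκψ using exists_κ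
  refine ⟨θ, κ, hθ, hκ, fun a ha b hb => ?_⟩
  have hψκ : κ a * b = ψ b a := by
    rw [H.right_part_eq_mul hq hθ hψ hqψ ha hb, ← hκψ a ha, mul_assoc, hb.1]
  exact hψκ ▸ hqψ b hb a ha

theorem exists_linearMap_sub_sub_mem_center (H : LoyalPeircePair e f)
    (hproper : CommutingMapsProper R e) (hq : HasCommutingTrace q) :
    ∃ μ : P →ₗ[R] P, (∀ x, μ x ∈ Subring.center P) ∧ ∀ a ∈ peirceCorner e e,
      ∀ b ∈ peirceCorner f f, q a b - μ b * a - μ a * b ∈ Subring.center P := by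
  obtain ⟨θ, κ, hθ, hκ, hqθκ⟩ := H.exists_center_sub_sub_center_mem_center hproper hq
  have corner_left := H.mul_mul_mem_left
  have corner_right := H.symm.mul_mul_mem_left
  let toLeft := LinearMap.mulRight R e ∘ₗ LinearMap.mulLeft R e
  let toRight := LinearMap.mulRight R f ∘ₗ LinearMap.mulLeft R f
  obtain ⟨θ', hθ'⟩ := exists_linearMap_eq_of_sub_mul_mem_center (w := fun x => θ (f * x * f))
    (fun z hz => H.eq_zero_of_mul_left_mem_center hz)
    (q e ∘ₗ toRight - LinearMap.mulLeft R (κ e) ∘ₗ toRight) (fun x => hθ _ (corner_right x))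
    (fun x => (sub_right_comm (q e (f * x * f)) _ _ ▸ hqθκ e H.left_mem _ (corner_right x) :))
  obtain ⟨κ', hκ'⟩ := exists_linearMap_eq_of_sub_mul_mem_center (w := fun x => κ (e * x * e))
    (fun z hz => H.eq_zero_of_mul_right_mem_center hz)
    (q.flip f ∘ₗ toLeft - LinearMap.mulLeft R (θ f) ∘ₗ toLeft) (fun x => hκ _ (corner_left x))
    (fun x => hqθκ _ (corner_left x) f H.right_mem)
  have left_values : ∀ a ∈ peirceCorner e e, (θ' + κ') a = κ a := by
    intro a ha
    have θ'_zero : θ' a = θ' 0 := by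
      simp only [hθ', peirceCorner.mul_eq_zero_of_left H.symm.mul_eq_zero ha, mul_zero]
    rw [LinearMap.add_apply, θ'_zero, map_zero, zero_add, hκ']
    simp only [ha.1, ha.2]
  have right_values : ∀ b ∈ peirceCorner f f, (θ' + κ') b = θ b := by
    intro b hb
    have κ'_zero : κ' b = κ' 0 := by
      simp only [hκ', peirceCorner.mul_eq_zero_of_left H.mul_eq_zero hb, mul_zero]
    rw [LinearMap.add_apply, κ'_zero, map_zero, add_zero, hθ']
    simp only [hb.1, hb.2]
  refine ⟨θ' + κ', fun x => add_mem ?_ ?_, fun a ha b hb => ?_⟩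
  · exact hθ' ▸ hθ _ (corner_right x)
  · exact hκ' ▸ hκ _ (corner_left x)
  · rw [left_values a ha, right_values b hb]
    exact hqθκ a ha b hb

theorem isProperTrace_of_commutingMapsProper_left (H : LoyalPeircePair e f)
    (hproper : CommutingMapsProper R e) (hq : HasCommutingTrace q) : IsProperTrace q := by
  obtain ⟨μ, hμ, hqμ⟩ := H.exists_linearMap_sub_sub_mem_center hproper hq
  refine .of_sub (zero_mem _) hμ (H.isProperTrace_of_apply_left_right_mem_center
    (hq.sub_standardTrace (zero_mem _) hμ) fun a ha b hb => ?_)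
  convert hqμ a ha b hb using 1
  simp only [LinearMap.sub_apply, standardTrace_apply, zero_mul, zero_add]
  abel

theorem isProperTrace (H : LoyalPeircePair e f)
    (hproper : CommutingMapsProper R e ∨ CommutingMapsProper R f) (hq : HasCommutingTrace q) :
    IsProperTrace q := by
  rcases hproper with hproper | hproper
  · exact H.isProperTrace_of_commutingMapsProper_left hproper hq
  · exact .of_op (H.op.isProperTrace_of_commutingMapsProper_left hproper.op hq.op)

end LoyalPeircePair

theorem mem_center_of_add_self_mem_center (R : Type*) {P : Type*} [CommRing R]
    [Invertible (2 : R)] [Ring P] [Algebra R P] {x : P} (h : x + x ∈ Subring.center P) :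
    x ∈ Subring.center P := by
  simpa only [← two_smul R x, invOf_smul_smul] using smul_mem_center (⅟2 : R) h

section ModuloCenter

variable {G P : Type*} [Ring P]

theorem map_mul_of_sub_mem_center [Semigroup G] {m : G → P}
    (h : ∀ x y, m (x * y) - m x * m y ∈ Subring.center P) {u v : G}
    (huv : ∀ z ∈ Subring.center P, z * ⁅m u, m v⁆ = 0 → z = 0) (x y : G) :
    m (x * y) = m x * m y := by
  have cocycle : ∀ x y z, (m (x * y) - m x * m y) * m z - (m (y * z) - m y * m z) * m x
      ∈ Subring.center P := by
    intro x y z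
    have := sub_mem (h x (y * z)) (h (x * y) z)
    rw [mul_assoc] at this
    convert this using 1
    rw [((h y z).comm (m x)).eq]
    noncomm_ring
  have right_zero : ∀ y, m (y * v) - m y * m v = 0 := by
    intro y
    refine huv _ (h y v) ?_
    have := ((cocycle u y v).comm (m v)).eq
    have hz := (h u y).left_comm (m v) (m v)
    have hz' := (h y v).left_comm (m v) (m u)
    rw [Ring.lie_def]
    linear_combination (norm := noncomm_ring) hz - hz' - this
  refine sub_eq_zero.1 (huv _ (h x y) ?_)
  have := ((cocycle x y v).comm (m u)).eq
  rw [right_zero, zero_mul, sub_zero] at this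
  have hz := (h x y).left_comm (m u) (m v)
  rw [Ring.lie_def]
  linear_combination (norm := noncomm_ring) hz - this

theorem map_mul_rev_of_sub_mem_center [Semigroup G] {m : G → P}
    (h : ∀ x y, m (x * y) - m y * m x ∈ Subring.center P) {u v : G}
    (huv : ∀ z ∈ Subring.center P, z * ⁅m v, m u⁆ = 0 → z = 0) (x y : G) :
    m (x * y) = m y * m x := by
  refine MulOpposite.op_injective (map_mul_of_sub_mem_center (m := fun x => MulOpposite.op (m x))
    (fun x y => op_mem_center (h x y)) (u := u) (v := v) (fun z hz hzuv => ?_) x y)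
  refine MulOpposite.unop_injective (huv _ (unop_mem_center hz) ?_)
  rw [((unop_mem_center hz).comm _).eq]
  exact congrArg MulOpposite.unop hzuv

/- The associator `x ∘ (z ∘ y) - (x ∘ z) ∘ y` of the Jordan product is the double commutator
`⁅⁅x, y⁆, z⁆`. -/
theorem exists_lie_lie_sub_mem_center [Ring G] {φ : G →+ P}
    (h : ∀ x y, φ (x * y + y * x) - (φ x * φ y + φ y * φ x) ∈ Subring.center P) (x y z : G) :
    ∃ α ∈ Subring.center P, ∃ β ∈ Subring.center P,
      φ ⁅⁅x, y⁆, z⁆ - ⁅⁅φ x, φ y⁆, φ z⁆ - α * φ x - β * φ y ∈ Subring.center P := by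
  have associator : φ ⁅⁅x, y⁆, z⁆ = φ (x * (z * y + y * z) + (z * y + y * z) * x)
      - φ ((x * z + z * x) * y + y * (x * z + z * x)) := by
    rw [← map_sub]
    simp only [Ring.lie_def]
    congr 1
    noncomm_ring
  have hzy := h z y
  have hxz := neg_mem (h x z)
  refine ⟨_, add_mem hzy hzy, _, add_mem hxz hxz, ?_⟩
  convert sub_mem (h x (z * y + y * z)) (h (x * z + z * x) y) using 1
  rw [associator]
  simp only [Ring.lie_def]
  linear_combination (norm := noncomm_ring) -((hzy.comm (φ x)).eq + (hxz.comm (φ y)).eq)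

end ModuloCenter

namespace LoyalPeircePair

variable {P : Type*} [Ring P] {e f : P}

theorem mul_mul_left_eq_zero_of_center_mul_eq_zero (H : LoyalPeircePair e f) {t x : P}
    (ht : t ∈ Subring.center P) (ht0 : t ≠ 0) (hx : t * x = 0) : e * x * e = 0 := by
  refine (H.eq_zero_or_eq_zero_of_center_mul_left ht (H.mul_mul_mem_left x) ?_).resolve_left ht0
  rw [mul_assoc, ht.left_comm, ← mul_assoc t, hx, zero_mul, mul_zero]

theorem mul_mul_right_eq_zero_of_center_mul_eq_zero (H : LoyalPeircePair e f) {t x : P}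
    (ht : t ∈ Subring.center P) (ht0 : t ≠ 0) (hx : t * x = 0) : f * x * f = 0 := by
  refine (H.eq_zero_or_eq_zero_of_center_mul_right ht (H.symm.mul_mul_mem_left x) ?_).resolve_left
    ht0
  rw [mul_assoc, ht.left_comm, ← mul_assoc t, hx, zero_mul, mul_zero]

theorem mul_eq_zero_of_center_mul_eq_zero (H : LoyalPeircePair e f) {t x y : P}
    (ht : t ∈ Subring.center P) (ht0 : t ≠ 0) (hx : t * x = 0) (hy : t * y = 0) : x * y = 0 := by
  have left : ∀ {w}, t * w = 0 → e * w * e = 0 :=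
    H.mul_mul_left_eq_zero_of_center_mul_eq_zero ht ht0
  have right : ∀ {w}, t * w = 0 → f * w * f = 0 :=
    H.mul_mul_right_eq_zero_of_center_mul_eq_zero ht ht0
  have hxy : t * (x * y) = 0 := by rw [← mul_assoc, hx, zero_mul]
  have upper : e * (x * y) * f = 0 := by
    linear_combination (norm := noncomm_ring)
      left hx * (y * f) + e * x * right hy - e * x * H.add_eq_one * (y * f)
  have lower : f * (x * y) * e = 0 := by
    linear_combination (norm := noncomm_ring)
      right hx * (y * e) + f * x * left hy - f * x * H.add_eq_one * (y * e)
  rw [H.eq_add_add_add (x * y), left hxy, right hxy, upper, lower]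
  simp only [add_zero]

theorem lie_lie_eq_zero_of_center_mul_mem_center (H : LoyalPeircePair e f) {t w : P}
    (ht : t ∈ Subring.center P) (ht0 : t ≠ 0) (hw : t * w ∈ Subring.center P) (x : P) :
    ⁅⁅x, w⁆, w⁆ = 0 := by
  have lie_torsion : ∀ x : P, t * ⁅x, w⁆ = 0 := by
    intro x
    rw [Ring.lie_def, mul_sub, ht.left_comm x w, ← mul_assoc t w, (hw.comm x).eq, sub_self]
  obtain ⟨z, hz, hze⟩ := H.exists_center_left (e * w * e) (H.mul_mul_mem_left w) fun a ha => by
    have := H.mul_mul_left_eq_zero_of_center_mul_eq_zero ht ht0 (lie_torsion a)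
    rw [commute_iff_eq]
    rw [Ring.lie_def] at this
    linear_combination (norm := noncomm_ring)
      e * w * ha.1 - ha.2 * (w * e) + ha.1 * (w * e) - e * w * ha.2 - this
  have torsion : t * (w - z) = 0 := by
    rw [mul_sub]
    refine (H.eq_zero_or_eq_zero_of_center_mul_left (sub_mem hw (mul_mem ht hz)) H.left_mem
      ?_).resolve_right H.left_ne_zero
    linear_combination (norm := noncomm_ring) hw.left_comm e e
      - t * w * H.isIdempotentElem_left - ht.left_comm e (w * e) - t * hze
  have hwz : ∀ y : P, ⁅y, w⁆ = ⁅y, w - z⁆ := fun y => by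
    rw [lie_sub, (hz.comm y).symm.lie_eq, sub_zero]
  rw [hwz, Ring.lie_def,
    H.mul_eq_zero_of_center_mul_eq_zero ht ht0 (lie_torsion x) torsion,
    H.mul_eq_zero_of_center_mul_eq_zero ht ht0 torsion (lie_torsion x), sub_zero]

end LoyalPeircePair

/-! ### Lie isomorphisms as deformed Jordan homomorphisms -/

section LieIsomorphism

variable {R G P : Type*} [CommRing R] [Ring G] [Algebra R G] [Ring P] [Algebra R P]
  {l : G ≃ₗ[R] P}

theorem map_mem_center_iff (hl : ∀ x y : G, l ⁅x, y⁆ = ⁅l x, l y⁆) {z : G} :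
    l z ∈ Subring.center P ↔ z ∈ Subring.center G := by
  simp only [mem_center_iff_forall_lie_eq_zero, l.surjective.forall, ← hl, l.map_eq_zero_iff]

/-- The Jordan product `x * y + y * x` of `G`, transported to `P` along `l`. -/
def jordanTransport (l : G ≃ₗ[R] P) : P →ₗ[R] P →ₗ[R] P :=
  ((LinearMap.mul R G + (LinearMap.mul R G).flip).compl₁₂ l.symm.toLinearMap
    l.symm.toLinearMap).compr₂ l.toLinearMap

theorem jordanTransport_apply (l : G ≃ₗ[R] P) (x y : G) :
    jordanTransport l (l x) (l y) = l (x * y + y * x) := by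
  simp [jordanTransport]

theorem hasCommutingTrace_jordanTransport (hl : ∀ x y : G, l ⁅x, y⁆ = ⁅l x, l y⁆) :
    HasCommutingTrace (jordanTransport l) where
  symm := by
    simp only [l.surjective.forall, jordanTransport_apply, add_comm, implies_true]
  lie_self := by
    have square_lie : ∀ x : G, ⁅x * x + x * x, x⁆ = 0 := fun x => by
      rw [Ring.lie_def]
      noncomm_ring
    simp only [l.surjective.forall, jordanTransport_apply, ← hl, square_lie, map_zero,
      implies_true]

/-- `l` is, modulo the center of `P`, a Jordan homomorphism deformed by a central coefficient `c`
and a central-valued linear map `μ`. -/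
structure IsDeformedJordan (l : G ≃ₗ[R] P) (c : P) (μ : P →ₗ[R] P) : Prop where
  coeff_mem : c ∈ Subring.center P
  map_mem : ∀ x, μ x ∈ Subring.center P
  sub_mem_center : ∀ x y : G, l (x * y + y * x)
    - (c * (l x * l y + l y * l x) + (μ (l x) * l y + μ (l y) * l x)) ∈ Subring.center P

theorem IsProperTrace.exists_isDeformedJordan (h : IsProperTrace (jordanTransport l)) :
    ∃ c : P, ∃ μ : P →ₗ[R] P, IsDeformedJordan l c μ := by
  obtain ⟨c, hc, μ, hμ, hl⟩ := h
  refine ⟨c, μ, hc, hμ, fun x y => ?_⟩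
  simpa only [LinearMap.sub_apply, jordanTransport_apply, standardTrace_apply] using hl (l x) (l y)

namespace IsDeformedJordan

variable [Invertible (2 : R)] {c : P} {μ : P →ₗ[R] P} {e f : P}

theorem coeff_ne_zero (hJ : IsDeformedJordan l c μ) (hl : ∀ x y : G, l ⁅x, y⁆ = ⁅l x, l y⁆)
    (H : LoyalPeircePair e f) {i j : G} (hij : PeircePair i j) (hj : j ∉ Subring.center G)
    {a a' : G} (ha : a ∈ peirceCorner i i) (ha' : a' ∈ peirceCorner i i) (hne : ⁅a, a'⁆ ≠ 0) :
    c ≠ 0 := by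
  rintro rfl
  have scaled_mem : (1 - μ (l j)) * l j ∈ Subring.center P := by
    refine mem_center_of_add_self_mem_center R ?_
    convert hJ.sub_mem_center j j using 1
    rw [hij.isIdempotentElem_right, map_add]
    noncomm_ring
  have μ_eq_one : μ (l j) = 1 := by
    by_contra hμ
    refine hj (mem_center_iff_forall_lie_eq_zero.2 fun x => ?_)
    rw [← lie_skew, ← lie_lie_lie_of_isIdempotentElem hij.isIdempotentElem_right, neg_eq_zero,
      ← l.map_eq_zero_iff, hl, hl]
    exact H.lie_lie_eq_zero_of_center_mul_mem_center (sub_mem (one_mem _) (hJ.map_mem _))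
      (sub_ne_zero.2 (Ne.symm hμ)) scaled_mem _
  have congr_j : ∀ a ∈ peirceCorner i i, l a - -(μ (l a) * l j) ∈ Subring.center P := by
    intro a ha
    have haj := hJ.sub_mem_center a j
    rw [hij.left_mul_right_eq_zero ha hij.right_mem,
      hij.symm.left_mul_right_eq_zero hij.right_mem ha, μ_eq_one] at haj
    convert neg_mem haj using 1
    simp only [add_zero, map_zero, zero_mul, one_mul]
    abel
  have hcomm : Commute (l j) (μ (l a') * l j) :=
    ((hJ.map_mem _).comm _).symm.mul_right (Commute.refl _)
  refine hne (l.map_eq_zero_iff.1 ?_)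
  rw [hl, lie_eq_lie_of_sub_mem_center (congr_j a ha), ← lie_skew,
    lie_eq_lie_of_sub_mem_center (congr_j a' ha'), lie_skew]
  exact ((((hJ.map_mem _).comm _).mul_left hcomm).neg_left.neg_right).lie_eq

end IsDeformedJordan

end LieIsomorphism

theorem center_mul_add_jordan {P : Type*} [Ring P] {c s t : P} (hc : c ∈ Subring.center P)
    (hs : s ∈ Subring.center P) (ht : t ∈ Subring.center P) (x y : P) :
    (c * x + s) * (c * y + t) + (c * y + t) * (c * x + s) =
      c * (c * (x * y + y * x) + ((s + s) * y + (t + t) * x)) + (s * t + s * t) := by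
  linear_combination (norm := noncomm_ring)
    -(c * hc.left_comm x y) - c * hc.left_comm y x
      - (ht.comm (c * x)).eq - 2 * (hc.comm t).eq * x
      - (hs.comm (c * y)).eq - 2 * (hc.comm s).eq * y - (hs.comm t).eq

section Undeform

variable {R G P : Type*} [CommRing R] [Invertible (2 : R)] [Ring G] [Algebra R G] [Ring P]
  [Algebra R P] {l : G ≃ₗ[R] P}

/-- The linear map `c · l + μ ∘ l / 2`. Completing the square in this way turns a deformed Jordan
homomorphism into a Jordan homomorphism modulo the center. -/
def undeform (l : G ≃ₗ[R] P) (c : P) (μ : P →ₗ[R] P) : G →ₗ[R] P :=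
  (LinearMap.mulLeft R c + (⅟2 : R) • μ) ∘ₗ l.toLinearMap

theorem undeform_apply (l : G ≃ₗ[R] P) (c : P) (μ : P →ₗ[R] P) (x : G) :
    undeform l c μ x = c * l x + (⅟2 : R) • μ (l x) :=
  rfl

namespace IsDeformedJordan

variable {c : P} {μ : P →ₗ[R] P} {e f : P}

theorem undeform_sub_mem_center (hJ : IsDeformedJordan l c μ) (x : G) :
    undeform l c μ x - c * l x ∈ Subring.center P := by
  rw [undeform_apply, add_sub_cancel_left]
  exact smul_mem_center _ (hJ.map_mem _)

theorem undeform_jordan_sub_mem_center (hJ : IsDeformedJordan l c μ) (x y : G) :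
    undeform l c μ (x * y + y * x)
      - (undeform l c μ x * undeform l c μ y + undeform l c μ y * undeform l c μ x)
      ∈ Subring.center P := by
  have half_mem : ∀ u, (⅟2 : R) • μ (l u) ∈ Subring.center P :=
    fun u => smul_mem_center _ (hJ.map_mem _)
  have two_halves : ∀ u, (⅟2 : R) • μ (l u) + (⅟2 : R) • μ (l u) = μ (l u) := fun u => by
    rw [← add_smul, invOf_two_add_invOf_two, one_smul]
  have correction := mul_mem (half_mem x) (half_mem y)
  have main := mul_mem hJ.coeff_mem (hJ.sub_mem_center x y)
  convert sub_mem (add_mem main (half_mem (x * y + y * x))) (add_mem correction correction) using 1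
  simp only [undeform_apply]
  rw [center_mul_add_jordan hJ.coeff_mem (half_mem x) (half_mem y), two_halves, two_halves]
  noncomm_ring

theorem lie_undeform (hJ : IsDeformedJordan l c μ) (hl : ∀ x y : G, l ⁅x, y⁆ = ⁅l x, l y⁆)
    (x y : G) : ⁅undeform l c μ x, undeform l c μ y⁆ = c * c * l ⁅x, y⁆ := by
  rw [hl, lie_eq_lie_of_sub_mem_center (hJ.undeform_sub_mem_center x), ← lie_skew,
    lie_eq_lie_of_sub_mem_center (hJ.undeform_sub_mem_center y), lie_skew,
    center_mul_lie hJ.coeff_mem, lie_center_mul hJ.coeff_mem, mul_assoc]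

theorem exists_coeff_mul_lie_lie_sub_mem_center (hJ : IsDeformedJordan l c μ)
    (hl : ∀ x y : G, l ⁅x, y⁆ = ⁅l x, l y⁆) (x y z : P) :
    ∃ α ∈ Subring.center P, ∃ β ∈ Subring.center P,
      (c - c * c * c) * ⁅⁅x, y⁆, z⁆ - α * x - β * y ∈ Subring.center P := by
  obtain ⟨α, hα, β, hβ, h⟩ := exists_lie_lie_sub_mem_center (φ := (undeform l c μ).toAddMonoidHom)
    hJ.undeform_jordan_sub_mem_center (l.symm x) (l.symm y) (l.symm z)
  have hφ := hJ.undeform_sub_mem_center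
  have lie_lie : ⁅⁅undeform l c μ (l.symm x), undeform l c μ (l.symm y)⁆,
      undeform l c μ (l.symm z)⁆ = c * c * c * ⁅⁅x, y⁆, z⁆ := by
    rw [hJ.lie_undeform hl, center_mul_lie (mul_mem hJ.coeff_mem hJ.coeff_mem), ← lie_skew,
      lie_eq_lie_of_sub_mem_center (hφ _), lie_skew, lie_center_mul hJ.coeff_mem, hl]
    simp only [l.apply_symm_apply, mul_assoc]
  refine ⟨α * c, mul_mem hα hJ.coeff_mem, β * c, mul_mem hβ hJ.coeff_mem, ?_⟩
  convert sub_mem (add_mem (add_mem h (mul_mem hα (hφ (l.symm x)))) (mul_mem hβ (hφ (l.symm y))))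
    (hφ ⁅⁅l.symm x, l.symm y⁆, l.symm z⁆) using 1
  simp only [LinearMap.toAddMonoidHom_coe, lie_lie, hl, l.apply_symm_apply]
  noncomm_ring

theorem coeff_mul_self_mul_self (hJ : IsDeformedJordan l c μ)
    (hl : ∀ x y : G, l ⁅x, y⁆ = ⁅l x, l y⁆) (H : LoyalPeircePair e f) : c * c * c = c := by
  obtain ⟨a, ha, a', ha', hne⟩ := H.exists_lie_ne_zero_left
  have hlie := peirceCorner.lie_mem ha ha'
  have hd := sub_mem hJ.coeff_mem (mul_mem (mul_mem hJ.coeff_mem hJ.coeff_mem) hJ.coeff_mem)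
  have hdlie : (c - c * c * c) * ⁅a, a'⁆ = 0 := by
    refine H.faithful_left (peirceCorner.center_mul_mem hd hlie) fun m hm => ?_
    obtain ⟨α, hα, β, hβ, h⟩ := hJ.exists_coeff_mul_lie_lie_sub_mem_center hl a a' m
    have hm_lie : m * ⁅a, a'⁆ = 0 := peirceCorner.mul_eq_zero_of_left
      (peirceCorner.mul_eq_zero_of_right H.symm.mul_eq_zero hm) hlie
    have hmem := peirceCorner.center_mul_mem hd (peirceCorner.mul_mem hlie hm)
    have hcomm : Commute ((c - c * c * c) * (⁅a, a'⁆ * m)) e := by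
      have hαa := (hα.comm e).mul_left (peirceCorner.commute ha)
      have hβa' := (hβ.comm e).mul_left (peirceCorner.commute ha')
      simpa [Ring.lie_def ⁅a, a'⁆, hm_lie] using ((h.comm e).add_left hβa').add_left hαa
    rw [mul_assoc, ← hmem.1, ← hcomm.eq,
      peirceCorner.mul_eq_zero_of_right H.symm.mul_eq_zero hmem]
  exact (sub_eq_zero.1 ((H.eq_zero_or_eq_zero_of_center_mul_left hd hlie hdlie).resolve_right
    hne)).symm

theorem coeff_eq_one_or_eq_neg_one (hJ : IsDeformedJordan l c μ)
    (hl : ∀ x y : G, l ⁅x, y⁆ = ⁅l x, l y⁆) (H : LoyalPeircePair e f) (hc : c ≠ 0) :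
    c = 1 ∨ c = -1 := by
  have factored : c * ((c - 1) * (c + 1)) = 0 := by
    linear_combination (norm := noncomm_ring) hJ.coeff_mul_self_mul_self hl H
  have hc1 := sub_mem hJ.coeff_mem (one_mem _)
  have hc1' := add_mem hJ.coeff_mem (one_mem _)
  refine (H.eq_zero_or_eq_zero_of_center_mul_center hc1 hc1'
    ((H.eq_zero_or_eq_zero_of_center_mul_center hJ.coeff_mem (mul_mem hc1 hc1')
      factored).resolve_left hc)).imp sub_eq_zero.1 eq_neg_of_add_eq_zero_left

theorem exists_lie_undeform_nondegenerate (hJ : IsDeformedJordan l c μ)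
    (hl : ∀ x y : G, l ⁅x, y⁆ = ⁅l x, l y⁆) (H : LoyalPeircePair e f) (hc : c * c = 1) :
    ∃ u v : G, ∀ z ∈ Subring.center P,
      z * ⁅undeform l c μ u, undeform l c μ v⁆ = 0 → z = 0 := by
  obtain ⟨a, ha, a', ha', hne⟩ := H.exists_lie_ne_zero_left
  refine ⟨l.symm a, l.symm a', fun z hz h => ?_⟩
  rw [hJ.lie_undeform hl, hl, hc, one_mul, l.apply_symm_apply, l.apply_symm_apply] at h
  exact (H.eq_zero_or_eq_zero_of_center_mul_left hz (peirceCorner.lie_mem ha ha') h).resolve_right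
    hne

theorem undeform_mul (hJ : IsDeformedJordan l 1 μ) (hl : ∀ x y : G, l ⁅x, y⁆ = ⁅l x, l y⁆)
    (H : LoyalPeircePair e f) (x y : G) :
    undeform l 1 μ (x * y) = undeform l 1 μ x * undeform l 1 μ y := by
  obtain ⟨u, v, huv⟩ := hJ.exists_lie_undeform_nondegenerate hl H (one_mul 1)
  refine map_mul_of_sub_mem_center (fun x y => mem_center_of_add_self_mem_center R ?_) huv x y
  have hsub := hJ.undeform_sub_mem_center ⁅x, y⁆
  convert add_mem (hJ.undeform_jordan_sub_mem_center x y) hsub using 1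
  have hlie := hJ.lie_undeform hl x y
  simp only [Ring.lie_def, map_add, map_sub] at hlie ⊢
  linear_combination (norm := noncomm_ring) -hlie

theorem undeform_mul_rev (hJ : IsDeformedJordan l (-1) μ)
    (hl : ∀ x y : G, l ⁅x, y⁆ = ⁅l x, l y⁆) (H : LoyalPeircePair e f) (x y : G) :
    undeform l (-1) μ (x * y) = undeform l (-1) μ y * undeform l (-1) μ x := by
  obtain ⟨u, v, huv⟩ := hJ.exists_lie_undeform_nondegenerate hl H (by rw [neg_mul_neg, one_mul])
  refine map_mul_rev_of_sub_mem_center (fun x y => mem_center_of_add_self_mem_center R ?_) huv x y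
  have hsub := hJ.undeform_sub_mem_center ⁅x, y⁆
  convert add_mem (hJ.undeform_jordan_sub_mem_center x y) hsub using 1
  have hlie := hJ.lie_undeform hl x y
  simp only [Ring.lie_def, map_add, map_sub] at hlie ⊢
  linear_combination (norm := noncomm_ring) hlie

theorem exists_sub_mem_center (hJ : IsDeformedJordan l c μ) (hl : ∀ x y : G, l ⁅x, y⁆ = ⁅l x, l y⁆)
    (H : LoyalPeircePair e f) (hc : c ≠ 0) :
    ∃ m : G →ₗ[R] P, (∀ x, l x - m x ∈ Subring.center P) ∧
      ((∀ x y, m (x * y) = m x * m y) ∨ ∀ x y, m (x * y) = -(m y * m x)) := by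
  rcases hJ.coeff_eq_one_or_eq_neg_one hl H hc with rfl | rfl
  · refine ⟨undeform l 1 μ, fun x => ?_, .inl (hJ.undeform_mul hl H)⟩
    simpa using neg_mem (hJ.undeform_sub_mem_center x)
  · refine ⟨-undeform l (-1) μ, fun x => ?_, .inr fun x y => ?_⟩
    · simpa [add_comm] using hJ.undeform_sub_mem_center x
    · simp [hJ.undeform_mul_rev hl H]

end IsDeformedJordan

end Undeform

/-! ### Central perturbations -/

section CentralPerturbation

variable {R G P : Type*} [CommRing R] [Ring G] [Algebra R G] [Ring P] [Algebra R P]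
  {l : G ≃ₗ[R] P} {m : G →ₗ[R] P} {e f : P}

theorem LoyalPeircePair.exists_sub_mem_center [Invertible (2 : R)] (H : LoyalPeircePair e f)
    (hproper : CommutingMapsProper R e ∨ CommutingMapsProper R f)
    (hl : ∀ x y : G, l ⁅x, y⁆ = ⁅l x, l y⁆) {i j : G} (hij : PeircePair i j)
    (hj : j ∉ Subring.center G)
    (hne : (∃ a ∈ peirceCorner i i, ∃ a' ∈ peirceCorner i i, ⁅a, a'⁆ ≠ 0) ∨
      ∃ b ∈ peirceCorner j j, ∃ b' ∈ peirceCorner j j, ⁅b, b'⁆ ≠ 0) :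
    ∃ m : G →ₗ[R] P, (∀ x, l x - m x ∈ Subring.center P) ∧
      ((∀ x y, m (x * y) = m x * m y) ∨ ∀ x y, m (x * y) = -(m y * m x)) := by
  obtain ⟨c, μ, hJ⟩ :=
    (H.isProperTrace hproper (hasCommutingTrace_jordanTransport hl)).exists_isDeformedJordan
  refine hJ.exists_sub_mem_center hl H ?_
  rcases hne with ⟨a, ha, a', ha', hne⟩ | ⟨b, hb, b', hb', hne⟩
  · exact hJ.coeff_ne_zero hl H hij hj ha ha' hne
  · exact hJ.coeff_ne_zero hl H hij.symm (hij.not_mem_center_left hj) hb hb' hne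

theorem map_lie_eq_of_sub_mem_center (hl : ∀ x y : G, l ⁅x, y⁆ = ⁅l x, l y⁆)
    (hlm : ∀ x, l x - m x ∈ Subring.center P)
    (hm : (∀ x y, m (x * y) = m x * m y) ∨ ∀ x y, m (x * y) = -(m y * m x)) (x y : G) :
    m ⁅x, y⁆ = l ⁅x, y⁆ := by
  have map_lie : m ⁅x, y⁆ = ⁅m x, m y⁆ := by
    rw [Ring.lie_def, Ring.lie_def, map_sub]
    rcases hm with hm | hm <;> rw [hm, hm]
    abel
  rw [map_lie, hl, lie_eq_lie_of_sub_mem_center (hlm x), ← lie_skew _ (l y),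
    lie_eq_lie_of_sub_mem_center (hlm y), lie_skew]

theorem injective_of_sub_mem_center (hl : ∀ x y : G, l ⁅x, y⁆ = ⁅l x, l y⁆)
    (hG : ∀ x : G, (∀ y, x * y ∈ Subring.center G) → x = 0)
    (hlm : ∀ x, l x - m x ∈ Subring.center P)
    (hm : (∀ x y, m (x * y) = m x * m y) ∨ ∀ x y, m (x * y) = -(m y * m x)) :
    Function.Injective m := by
  refine (injective_iff_map_eq_zero m).2 fun x hx => hG x fun y => (map_mem_center_iff hl).1 ?_
  have hmxy : m (x * y) = 0 := by
    rcases hm with hm | hm <;> simp [hm, hx]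
  simpa [hmxy] using hlm (x * y)

theorem LoyalPeircePair.map_one_eq_one_or_eq_neg_one (H : LoyalPeircePair e f)
    (hl : ∀ x y : G, l ⁅x, y⁆ = ⁅l x, l y⁆) (hinj : Function.Injective m)
    (hlm : ∀ x, l x - m x ∈ Subring.center P)
    (hm : (∀ x y, m (x * y) = m x * m y) ∨ ∀ x y, m (x * y) = -(m y * m x)) :
    m 1 = 1 ∨ m 1 = -1 := by
  have hm1 : m 1 ∈ Subring.center P := by
    simpa using sub_mem ((map_mem_center_iff hl).2 (one_mem _)) (hlm 1)
  have hm1_ne : m 1 ≠ 0 := by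
    intro h0
    have one_eq_zero : (1 : G) = 0 := hinj (h0.trans (map_zero m).symm)
    refine H.left_ne_zero ?_
    rw [← l.apply_symm_apply e, ← one_mul (l.symm e), one_eq_zero, zero_mul, map_zero]
  refine hm.imp (fun hm => sub_eq_zero.1 ?_) (fun hm => eq_neg_of_add_eq_zero_left ?_)
  · refine (H.eq_zero_or_eq_zero_of_center_mul_center hm1 (sub_mem hm1 (one_mem _))
      ?_).resolve_left hm1_ne
    rw [mul_sub, ← hm, mul_one, mul_one, sub_self]
  · refine (H.eq_zero_or_eq_zero_of_center_mul_center hm1 (add_mem hm1 (one_mem _))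
      ?_).resolve_left hm1_ne
    rw [mul_add, ← neg_eq_iff_eq_neg.2 (hm 1 1), mul_one, mul_one, neg_add_cancel]

theorem surjective_of_sub_mem_center (hm1 : m 1 = 1 ∨ m 1 = -1)
    (hZ : (Subring.center P : Set P) = Set.range (algebraMap R P))
    (hlm : ∀ x, l x - m x ∈ Subring.center P) : Function.Surjective m := by
  intro y
  obtain ⟨r, hr⟩ : l (l.symm y) - m (l.symm y) ∈ Set.range (algebraMap R P) := hZ ▸ hlm _
  rw [l.apply_symm_apply, Algebra.algebraMap_eq_smul_one, eq_sub_iff_add_eq'] at hr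
  rcases hm1 with hm1 | hm1
  · exact ⟨l.symm y + r • 1, by rw [map_add, map_smul, hm1, hr]⟩
  · exact ⟨l.symm y - r • 1, by rw [map_sub, map_smul, hm1, smul_neg, sub_neg_eq_add, hr]⟩

end CentralPerturbation

theorem exists_mul_ne_mul_of_center_ne_univ {A : Type*} [Ring A]
    (h : (Subring.center A : Set A) ≠ Set.univ) : ∃ a a' : A, a * a' ≠ a' * a := by
  contrapose! h
  exact Set.eq_univ_of_forall fun a => Subring.mem_center_iff.2 fun a' => h a' a

/-! ### Generalized matrix algebras as Peirce pairs -/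

/-- The maps `ι` and `p` identify the algebra `A` with the corner `ePe`, the inverse `p` being
extended to all of `P` by compression. -/
structure IsCornerEmbedding {R A P : Type*} [CommRing R] [Ring A] [Algebra R A] [Ring P]
    [Algebra R P] (ι : A →ₗ[R] P) (p : P →ₗ[R] A) (e : P) : Prop where
  isIdempotentElem : e * e = e
  map_mul : ∀ a a', ι (a * a') = ι a * ι a'
  map_mem : ∀ a, ι a ∈ peirceCorner e e
  leftInverse : ∀ a, p (ι a) = a
  map_compression : ∀ x, ι (p x) = e * x * e

namespace IsCornerEmbedding

variable {R A P : Type*} [CommRing R] [Ring A] [Algebra R A] [Ring P] [Algebra R P]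
  {ι : A →ₗ[R] P} {p : P →ₗ[R] A} {e : P}

theorem injective (h : IsCornerEmbedding ι p e) : Function.Injective ι :=
  Function.LeftInverse.injective h.leftInverse

theorem map_compression_of_mem (h : IsCornerEmbedding ι p e) {x : P} (hx : x ∈ peirceCorner e e) :
    ι (p x) = x := by
  rw [h.map_compression, hx.1, hx.2]

theorem map_compression_of_mem_center (h : IsCornerEmbedding ι p e) {z : P}
    (hz : z ∈ Subring.center P) : ι (p z) = z * e := by
  rw [h.map_compression, ← (hz.comm e).eq, mul_assoc, h.isIdempotentElem]

theorem commute_map_iff (h : IsCornerEmbedding ι p e) {a a' : A} :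
    Commute (ι a) (ι a') ↔ Commute a a' := by
  rw [commute_iff_eq, commute_iff_eq, ← h.map_mul, ← h.map_mul, h.injective.eq_iff]

theorem exists_center_mul_eq (h : IsCornerEmbedding ι p e)
    (hZ : p '' (Subring.center P : Set P) = (Subring.center A : Set A)) {a : P}
    (ha : a ∈ peirceCorner e e) (hcomm : ∀ x ∈ peirceCorner e e, Commute a x) :
    ∃ z ∈ Subring.center P, z * e = a := by
  have hpa : p a ∈ (Subring.center A : Set A) := Subring.mem_center_iff.2 fun a' => by
    refine (h.commute_map_iff.1 ?_).symm
    rw [h.map_compression_of_mem ha]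
    exact hcomm _ (h.map_mem a')
  obtain ⟨z, hz, hza⟩ := hZ ▸ hpa
  exact ⟨z, hz, by rw [← h.map_compression_of_mem_center hz, hza, h.map_compression_of_mem ha]⟩

theorem exists_lie_ne_zero (h : IsCornerEmbedding ι p e) (hA : ∃ a a' : A, a * a' ≠ a' * a) :
    ∃ a ∈ peirceCorner e e, ∃ a' ∈ peirceCorner e e, ⁅a, a'⁆ ≠ 0 := by
  obtain ⟨a, a', hne⟩ := hA
  exact ⟨_, h.map_mem a, _, h.map_mem a', fun h0 =>
    hne (h.commute_map_iff.1 (commute_iff_lie_eq.2 h0))⟩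

theorem commutingMapsProper (h : IsCornerEmbedding ι p e)
    (hZ : p '' (Subring.center P : Set P) = (Subring.center A : Set A))
    (hA : ∀ F : A →ₗ[R] A, (∀ a, F a * a = a * F a) →
      ∃ z ∈ Subring.center A, ∃ η : A →ₗ[R] A,
        (∀ a, η a ∈ Subring.center A) ∧ ∀ a, F a = z * a + η a) :
    CommutingMapsProper R e := by
  intro F hF hcomm
  have map_pFι : ∀ a, ι (p (F (ι a))) = F (ι a) := fun a =>
    h.map_compression_of_mem (hF _ (h.map_mem a))
  obtain ⟨z, hz, η, hη, hFη⟩ := hA (p ∘ₗ F ∘ₗ ι) fun a => h.commute_map_iff.1 <|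
    (map_pFι a).symm ▸ hcomm _ (h.map_mem a)
  obtain ⟨w, hw, hwz⟩ : z ∈ p '' (Subring.center P : Set P) := hZ ▸ hz
  refine ⟨w, hw, fun a ha x hx => ?_⟩
  have hsub : F a - w * a = ι (η (p a)) := by
    have hFa := congrArg ι (hFη (p a))
    rw [LinearMap.comp_apply, LinearMap.comp_apply, map_pFι, map_add, h.map_mul, ← hwz,
      h.map_compression_of_mem_center hw, h.map_compression_of_mem ha, mul_assoc, ha.1] at hFa
    rw [hFa, add_sub_cancel_left]
  rw [hsub, ← h.map_compression_of_mem hx, h.commute_map_iff]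
  exact (hη _).comm _

end IsCornerEmbedding

namespace GMA

variable {R A B M N G : Type*} [CommRing R] [Ring A] [Algebra R A] [Ring B] [Algebra R B]
  [AddCommGroup M] [Module R M] [AddCommGroup N] [Module R N] [Ring G] [Algebra R G]

theorem peircePair (h : GMA R A B M N G) : PeircePair (h.ιA 1) (h.ιB 1) where
  add_eq_one := h.one_def.symm
  mul_eq_zero := h.mul_AB 1 1

theorem ιM_mem (h : GMA R A B M N G) (m : M) : h.ιM m ∈ peirceCorner (h.ιA 1) (h.ιB 1) := by
  constructor
  · rw [← add_zero (h.ιA 1 * h.ιM m), ← h.mul_BM 1 m, ← add_mul, ← h.one_def, one_mul]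
  · rw [← zero_add (h.ιM m * h.ιB 1), ← h.mul_MA m 1, ← mul_add, ← h.one_def, mul_one]

theorem ιN_mem (h : GMA R A B M N G) (n : N) : h.ιN n ∈ peirceCorner (h.ιB 1) (h.ιA 1) := by
  constructor
  · rw [← zero_add (h.ιB 1 * h.ιN n), ← h.mul_AN 1 n, ← add_mul, ← h.one_def, one_mul]
  · rw [← add_zero (h.ιN n * h.ιA 1), ← h.mul_NB n 1, ← mul_add, ← h.one_def, mul_one]

theorem isCornerEmbedding_ιA (h : GMA R A B M N G) :
    IsCornerEmbedding h.ιA h.pA (h.ιA 1) where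
  isIdempotentElem := h.peircePair.isIdempotentElem_left
  map_mul a a' := (h.mul_AA a a').symm
  map_mem a := ⟨by rw [h.mul_AA, one_mul], by rw [h.mul_AA, mul_one]⟩
  leftInverse := h.pA_ιA
  map_compression x := by
    rw [congrArg (h.ιA 1 * ·) (h.decomp x)]
    simp only [mul_add, add_mul, h.mul_AA, h.mul_AN, h.mul_AB, h.mul_MA, mul_assoc, one_mul,
      mul_one, mul_zero, add_zero]

theorem isCornerEmbedding_ιB (h : GMA R A B M N G) :
    IsCornerEmbedding h.ιB h.pB (h.ιB 1) where
  isIdempotentElem := h.peircePair.isIdempotentElem_right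
  map_mul b b' := (h.mul_BB b b').symm
  map_mem b := ⟨by rw [h.mul_BB, one_mul], by rw [h.mul_BB, mul_one]⟩
  leftInverse := h.pB_ιB
  map_compression x := by
    rw [congrArg (h.ιB 1 * ·) (h.decomp x)]
    simp only [mul_add, add_mul, h.mul_BB, h.mul_BM, h.mul_BA, h.mul_NB, mul_assoc, one_mul,
      mul_one, mul_zero, zero_add]

theorem ιB_one_not_mem_center (h : GMA R A B M N G)
    (hMN : (∃ m : M, m ≠ 0) ∨ (∃ n : N, n ≠ 0)) : h.ιB 1 ∉ Subring.center G := by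
  intro hB
  rcases hMN with ⟨m, hm⟩ | ⟨n, hn⟩
  · refine hm ?_
    rw [← h.pM_ιM m, ← (h.ιM_mem m).2, ← (hB.comm _).eq, h.mul_BM, map_zero]
  · refine hn ?_
    rw [← h.pN_ιN n, ← (h.ιN_mem n).1, (hB.comm _).eq, h.mul_NB, map_zero]

theorem eq_zero_of_forall_mul_mem_center (h : GMA R A B M N G) {x : G}
    (hx : ∀ y, x * y ∈ Subring.center G) : x = 0 := by
  refine h.peircePair.eq_zero_of_forall_mul_mem_center (fun a ha ham => ?_) (fun b hb hmb => ?_) hx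
  · rw [← h.isCornerEmbedding_ιA.map_compression_of_mem ha] at ham ⊢
    rw [h.faithful_left _ fun m => ham _ (h.ιM_mem m), map_zero]
  · rw [← h.isCornerEmbedding_ιB.map_compression_of_mem hb] at hmb ⊢
    rw [h.faithful_right _ fun m => hmb _ (h.ιM_mem m), map_zero]

theorem loyalPeircePair (h : GMA R A B M N G)
    (hA : h.pA '' (Subring.center G : Set G) = (Subring.center A : Set A))
    (hA' : (Subring.center A : Set A) ≠ Set.univ)
    (hB : h.pB '' (Subring.center G : Set G) = (Subring.center B : Set B))
    (hB' : (Subring.center B : Set B) ≠ Set.univ)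
    (hloyal : ∀ (a : A) (b : B), (∀ m : M, h.ιA a * h.ιM m * h.ιB b = 0) → a = 0 ∨ b = 0) :
    LoyalPeircePair (h.ιA 1) (h.ιB 1) where
  toPeircePair := h.peircePair
  loyal a ha b hb hab := by
    rw [← h.isCornerEmbedding_ιA.map_compression_of_mem ha,
      ← h.isCornerEmbedding_ιB.map_compression_of_mem hb] at hab ⊢
    exact (hloyal _ _ fun m => hab _ (h.ιM_mem m)).imp (fun h0 => by rw [h0, map_zero])
      (fun h0 => by rw [h0, map_zero])
  exists_center_left _ := h.isCornerEmbedding_ιA.exists_center_mul_eq hA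
  exists_center_right _ := h.isCornerEmbedding_ιB.exists_center_mul_eq hB
  exists_lie_ne_zero_left := h.isCornerEmbedding_ιA.exists_lie_ne_zero
    (exists_mul_ne_mul_of_center_ne_univ hA')
  exists_lie_ne_zero_right := h.isCornerEmbedding_ιB.exists_lie_ne_zero
    (exists_mul_ne_mul_of_center_ne_univ hB')

end GMA

end

/-- **Theorem 4.3.**  Let `G = [A M; N B]` and `G' = [A' M'; N' B']` be generalized
matrix algebras over a commutative ring `R` with `1/2 ∈ R` and let `l : G → G'` be a
Lie isomorphism.  If
(1) every commuting `R`-linear map on `A'` or on `B'` is proper,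
(2) `π_{A'}(Z(G')) = Z(A') ≠ A'` and `π_{B'}(Z(G')) = Z(B') ≠ B'`,
(3) at least one of `A`, `B` is noncommutative, and
(4) `M'` is loyal,
then `l = m + n`, where `m : G → G'` is an injective homomorphism or the negative of
an injective anti-homomorphism and `n : G → Z(G')` is a linear map vanishing on each
commutator.  Moreover, if `G'` is central over `R`, then `m` is surjective. -/
theorem stmt14 (R A B M N G A' B' M' N' G' : Type*) [CommRing R]
    [Invertible (2 : R)]
    [Ring A] [Algebra R A] [Ring B] [Algebra R B]
    [AddCommGroup M] [Module R M] [AddCommGroup N] [Module R N]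
    [Ring G] [Algebra R G]
    [Ring A'] [Algebra R A'] [Ring B'] [Algebra R B']
    [AddCommGroup M'] [Module R M'] [AddCommGroup N'] [Module R N']
    [Ring G'] [Algebra R G']
    (h : GMA R A B M N G) (h' : GMA R A' B' M' N' G')
    (hMN : (∃ m : M, m ≠ 0) ∨ (∃ n : N, n ≠ 0))
    (hMN' : (∃ m : M', m ≠ 0) ∨ (∃ n : N', n ≠ 0))
    (l : G ≃ₗ[R] G')
    (hLie : ∀ x y : G, l (x * y - y * x) = l x * l y - l y * l x)
    (h1 : (∀ f : A' →ₗ[R] A', (∀ a, f a * a = a * f a) →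
            ∃ z ∈ Subring.center A', ∃ η : A' →ₗ[R] A',
              (∀ a, η a ∈ Subring.center A') ∧ ∀ a, f a = z * a + η a) ∨
          (∀ f : B' →ₗ[R] B', (∀ b, f b * b = b * f b) →
            ∃ z ∈ Subring.center B', ∃ η : B' →ₗ[R] B',
              (∀ b, η b ∈ Subring.center B') ∧ ∀ b, f b = z * b + η b))
    (h2A : h'.pA '' (Subring.center G' : Set G') = (Subring.center A' : Set A'))
    (h2A' : (Subring.center A' : Set A') ≠ Set.univ)
    (h2B : h'.pB '' (Subring.center G' : Set G') = (Subring.center B' : Set B'))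
    (h2B' : (Subring.center B' : Set B') ≠ Set.univ)
    (h3 : (∃ a a' : A, a * a' ≠ a' * a) ∨ (∃ b b' : B, b * b' ≠ b' * b))
    (h4 : ∀ (a : A') (b : B'),
            (∀ m : M', h'.ιA a * h'.ιM m * h'.ιB b = 0) → a = 0 ∨ b = 0) :
    ∃ m : G →ₗ[R] G', ∃ nm : G →ₗ[R] G',
      (∀ x : G, l x = m x + nm x) ∧
      Function.Injective m ∧
      ((∀ x y : G, m (x * y) = m x * m y) ∨ (∀ x y : G, m (x * y) = -(m y * m x))) ∧
      (∀ x : G, nm x ∈ Subring.center G') ∧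
      (∀ x y : G, nm (x * y - y * x) = 0) ∧
      ((Subring.center G' : Set G') = Set.range (algebraMap R G') →
        Function.Surjective m) := by
  have H := h'.loyalPeircePair h2A h2A' h2B h2B' h4
  have hproper := h1.imp (h'.isCornerEmbedding_ιA.commutingMapsProper h2A)
    (h'.isCornerEmbedding_ιB.commutingMapsProper h2B)
  obtain ⟨m, hlm, hm⟩ := H.exists_sub_mem_center hproper hLie h.peircePair
    (h.ιB_one_not_mem_center hMN)
    (h3.imp h.isCornerEmbedding_ιA.exists_lie_ne_zero h.isCornerEmbedding_ιB.exists_lie_ne_zero)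
  have hinj : Function.Injective m :=
    injective_of_sub_mem_center hLie (fun _ => h.eq_zero_of_forall_mul_mem_center) hlm hm
  refine ⟨m, l - m, fun x => (add_sub_cancel (m x) (l x)).symm, hinj, hm, hlm, fun x y => ?_,
    fun hZ => ?_⟩
  · exact sub_eq_zero.2 (map_lie_eq_of_sub_mem_center hLie hlm hm x y).symm
  · exact surjective_of_sub_mem_center (H.map_one_eq_one_or_eq_neg_one hLie hinj hlm hm) hZ hlm
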